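/- arXiv:2103.14436 — 3 statements merged into one kernel-verified Lean document; each statement's English description precedes it below -/
import Mathlib

section
/- Let PG_n and CG_n denote the path graph and the cycle graph on n vertices, both with unit edge weights. Then the partition function of CG_n satisfies, for all q>0: Z_{CG_n}(q) = Z_{PG_n}(q) + (2/q)·[ Z_{PG_n}(q) − Z_{PG_{n−1}}(q) ] − 2, and moreover Z_{CG_n}(q) = ∑_{k=1}^{n} ( C(n+k, 2k) + C(n+k−1, 2k) )·q^k, where C(a,b) denotes the binomial coefficient. -/
open Classical Finset

noncomputable section

/-- The graph Laplacian `L = A - D` of the weighted directed graph with edge relation `E`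
and weights `w`: `A x y = w x y · 1_{E x y, x ≠ y}` and `D` is the diagonal matrix of
total outgoing weights. -/
def lapOf {V : Type*} [Fintype V] [DecidableEq V] (E : V → V → Prop) (w : V → V → ℝ) :
    Matrix V V ℝ := fun x y =>
  (if E x y ∧ x ≠ y then w x y else 0) -
    (if x = y then ∑ z : V, (if E x z ∧ x ≠ z then w x z else 0) else 0)

/-- The partition function `Z(q) = det (q·I - L)` (matrix-forest theorem). -/
def Zdet {V : Type*} [Fintype V] [DecidableEq V] (E : V → V → Prop) (w : V → V → ℝ)
    (q : ℝ) : ℝ := (q • (1 : Matrix V V ℝ) - lapOf E w).det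

/-- The path graph on `n` vertices: `i` and `i+1` are adjacent. -/
def pathAdj (n : ℕ) : Fin n → Fin n → Prop := fun i j =>
  (i : ℕ) + 1 = (j : ℕ) ∨ (j : ℕ) + 1 = (i : ℕ)

/-- The cycle graph on `n` vertices: `i` and `i+1 (mod n)` are adjacent. -/
def cycAdj (n : ℕ) : Fin n → Fin n → Prop := fun i j =>
  i ≠ j ∧ ((j : ℕ) = ((i : ℕ) + 1) % n ∨ (i : ℕ) = ((j : ℕ) + 1) % n)

/-- The polynomial `∑ k, C(n+k, 2k) q ^ k`, the determinant of the grounded path Laplacian. -/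
def groundedPath (q : ℝ) (n : ℕ) : ℝ :=
  ∑ k ∈ Finset.range (n + 1), ((n + k).choose (2 * k) : ℝ) * q ^ k

lemma groundedPath_eq_sum_range (q : ℝ) {n N : ℕ} (h : n + 1 ≤ N) :
    groundedPath q n = ∑ k ∈ Finset.range N, ((n + k).choose (2 * k) : ℝ) * q ^ k := by
  refine Finset.sum_subset (Finset.range_subset_range.2 h) fun k _ hk => ?_
  rw [Finset.mem_range] at hk
  rw [Nat.choose_eq_zero_of_lt (by omega)]
  simp

lemma groundedPath_zero (q : ℝ) : groundedPath q 0 = 1 := by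
  simp [groundedPath]

lemma groundedPath_one (q : ℝ) : groundedPath q 1 = q + 1 := by
  simp [groundedPath, Finset.sum_range_succ, add_comm]

lemma groundedPath_add_two (q : ℝ) (n : ℕ) :
    groundedPath q (n + 2) = (q + 2) * groundedPath q (n + 1) - groundedPath q n := by
  have pascal (k : ℕ) : ((n + 2 + (k + 1)).choose (2 * (k + 1)) : ℝ) =
      (n + 1 + k).choose (2 * k) + 2 * (n + 1 + (k + 1)).choose (2 * (k + 1))
        - (n + (k + 1)).choose (2 * (k + 1)) := by
    have h₁ := Nat.choose_succ_succ (n + k + 2) (2 * k + 1)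
    have h₂ := Nat.choose_succ_succ (n + k + 1) (2 * k)
    have h₃ := Nat.choose_succ_succ (n + k + 1) (2 * k + 1)
    simp only [Nat.succ_eq_add_one, Nat.add_assoc, Nat.reduceAdd] at h₁ h₂ h₃
    rw [show n + 2 + (k + 1) = n + k + 2 + 1 by ring, show 2 * (k + 1) = 2 * k + 1 + 1 by ring,
      show n + 1 + (k + 1) = n + k + 1 + 1 by ring, show n + 1 + k = n + k + 1 by ring,
      show n + (k + 1) = n + k + 1 by ring, eq_sub_iff_add_eq]
    norm_cast
    simp only [Nat.add_assoc, Nat.reduceAdd]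
    omega
  rw [groundedPath_eq_sum_range q (show n + 2 + 1 ≤ n + 4 by omega),
    groundedPath_eq_sum_range q (show n + 1 ≤ n + 4 by omega), add_mul,
    groundedPath_eq_sum_range q (show n + 1 + 1 ≤ n + 3 by omega)]
  nth_rewrite 2 [← groundedPath_eq_sum_range q (show n + 1 + 1 ≤ n + 3 by omega)]
  rw [groundedPath_eq_sum_range q (show n + 1 + 1 ≤ n + 4 by omega),
    Finset.sum_range_succ', Finset.sum_range_succ' _ (n + 3), Finset.sum_range_succ' _ (n + 3),
    Finset.mul_sum, mul_add, Finset.mul_sum]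
  have : ∑ k ∈ Finset.range (n + 3),
        ((n + 2 + (k + 1)).choose (2 * (k + 1)) : ℝ) * q ^ (k + 1) =
      ∑ k ∈ Finset.range (n + 3), q * (((n + 1 + k).choose (2 * k) : ℝ) * q ^ k) +
      ∑ k ∈ Finset.range (n + 3),
        2 * (((n + 1 + (k + 1)).choose (2 * (k + 1)) : ℝ) * q ^ (k + 1)) -
      ∑ k ∈ Finset.range (n + 3), ((n + (k + 1)).choose (2 * (k + 1)) : ℝ) * q ^ (k + 1) := by
    rw [← Finset.sum_add_distrib, ← Finset.sum_sub_distrib]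
    refine Finset.sum_congr rfl fun k _ => ?_
    rw [pascal]
    ring
  rw [this]
  simp
  ring

lemma groundedPath_mul_add {a b q : ℝ} (hab : a * b = 1) (hq : a ^ 2 + b ^ 2 = q + 2) (n : ℕ) :
    groundedPath q n * (a + b) = a ^ (2 * n + 1) + b ^ (2 * n + 1) := by
  induction n using Nat.twoStepInduction with
  | zero => simp [groundedPath_zero]
  | one =>
    rw [groundedPath_one]
    linear_combination (-a - b) * hq + (a + b) * hab
  | more n h₁ h₂ =>
    rw [groundedPath_add_two, sub_mul, mul_assoc, h₁, h₂]
    have e : a ^ 2 * b ^ 2 = 1 := by rw [← mul_pow, hab, one_pow]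
    linear_combination -(a ^ (2 * (n + 1) + 1) + b ^ (2 * (n + 1) + 1)) * hq +
      (a ^ (2 * n + 1) + b ^ (2 * n + 1)) * e

lemma groundedPath_add_groundedPath {a b q : ℝ} (h : a + b ≠ 0) (hab : a * b = 1)
    (hq : a ^ 2 + b ^ 2 = q + 2) (n : ℕ) :
    groundedPath q (n + 1) + groundedPath q n = a ^ (2 * (n + 1)) + b ^ (2 * (n + 1)) := by
  refine mul_right_cancel₀ h ?_
  rw [add_mul, groundedPath_mul_add hab hq, groundedPath_mul_add hab hq]
  linear_combination -(a ^ (2 * n + 1) + b ^ (2 * n + 1)) * hab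

/-- The tridiagonal matrix with diagonal `d` and all off-diagonal entries `-1`. -/
def tridiag {n : ℕ} (d : Fin n → ℝ) : Matrix (Fin n) (Fin n) ℝ := fun i j =>
  if i = j then d i else if (i : ℕ) + 1 = j ∨ (j : ℕ) + 1 = i then -1 else 0

lemma det_tridiag_add_two {n : ℕ} (d : Fin (n + 2) → ℝ) :
    (tridiag d).det = d 0 * (tridiag fun i : Fin (n + 1) => d i.succ).det -
      (tridiag fun i : Fin n => d i.succ.succ).det := by
  have minor₀ : (tridiag d).submatrix Fin.succ (Fin.succAbove 0) =
      tridiag fun i : Fin (n + 1) => d i.succ := by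
    ext i j
    simp [tridiag, Fin.succ_inj]
  have minor₁ : ((tridiag d).submatrix Fin.succ (Fin.succAbove 1)).det =
      -(tridiag fun i : Fin n => d i.succ.succ).det := by
    rw [Matrix.det_succ_column_zero, Fin.sum_univ_succ, Finset.sum_eq_zero, add_zero]
    · have : ((tridiag d).submatrix Fin.succ (Fin.succAbove 1)).submatrix
          (Fin.succAbove 0) Fin.succ = tridiag fun i : Fin n => d i.succ.succ := by
        ext i j
        have : (1 : Fin (n + 2)).succAbove j.succ = j.succ.succ :=
          Fin.succAbove_of_lt_succ _ _ (by simp [Fin.lt_def])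
        simp [tridiag, Fin.succ_inj, this]
      rw [this]
      simp [tridiag]
    · intro i _
      simp [tridiag, Fin.ext_iff]
  rw [Matrix.det_succ_row_zero, Fin.sum_univ_succ, Fin.sum_univ_succ, Finset.sum_eq_zero,
    minor₀, Fin.succ_zero_eq_one, minor₁]
  · simp [tridiag]
    ring
  · intro i _
    simp [tridiag, Fin.ext_iff]

lemma det_tridiag_grounded (q : ℝ) (n : ℕ) :
    (tridiag fun i : Fin n => if (i : ℕ) + 1 = n then q + 1 else q + 2).det =
      groundedPath q n := by
  induction n using Nat.twoStepInduction with
  | zero => simp [groundedPath_zero]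
  | one => simp [groundedPath_one, tridiag]
  | more n h₁ h₂ =>
    rw [det_tridiag_add_two, groundedPath_add_two, ← h₁, ← h₂]
    simp

lemma Zdet_pathAdj (q : ℝ) (n : ℕ) :
    Zdet (pathAdj (n + 2)) (fun _ _ => (1 : ℝ)) q =
      (q + 1) * groundedPath q (n + 1) - groundedPath q n := by
  have degree (i : Fin (n + 2)) :
      ∑ z, (if pathAdj (n + 2) i z ∧ i ≠ z then (1 : ℝ) else 0) =
        if (i : ℕ) = 0 ∨ (i : ℕ) + 1 = n + 2 then 1 else 2 := by
    have split (z : Fin (n + 2)) : (if pathAdj (n + 2) i z ∧ i ≠ z then (1 : ℝ) else 0) =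
        (if (i : ℕ) + 1 = z then 1 else 0) + if (z : ℕ) + 1 = i then 1 else 0 := by
      have : i = z ↔ (i : ℕ) = z := Fin.ext_iff
      simp only [pathAdj, ne_eq, this]
      split_ifs <;> first | omega | norm_num
    have up : ∑ z : Fin (n + 2), (if (i : ℕ) + 1 = z then (1 : ℝ) else 0) =
        if (i : ℕ) + 1 = n + 2 then 0 else 1 := by
      split_ifs with h
      · exact Finset.sum_eq_zero fun z _ => if_neg (by omega)
      · have (z : Fin (n + 2)) : (i : ℕ) + 1 = z ↔ (⟨i + 1, by omega⟩ : Fin (n + 2)) = z := by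
          simp [Fin.ext_iff]
        simp [this]
    have down : ∑ z : Fin (n + 2), (if (z : ℕ) + 1 = i then (1 : ℝ) else 0) =
        if (i : ℕ) = 0 then 0 else 1 := by
      split_ifs with h
      · exact Finset.sum_eq_zero fun z _ => if_neg (by omega)
      · have (z : Fin (n + 2)) : (z : ℕ) + 1 = i ↔ (⟨i - 1, by omega⟩ : Fin (n + 2)) = z := by
          simp only [Fin.ext_iff]
          omega
        simp [this]
    simp only [split, Finset.sum_add_distrib, up, down]
    split_ifs <;> first | omega | norm_num
  have key : q • (1 : Matrix (Fin (n + 2)) (Fin (n + 2)) ℝ) -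
      lapOf (pathAdj (n + 2)) (fun _ _ => (1 : ℝ)) =
      tridiag fun i => if (i : ℕ) = 0 ∨ (i : ℕ) + 1 = n + 2 then q + 1 else q + 2 := by
    ext i j
    by_cases hij : i = j
    · subst hij
      simp only [Matrix.sub_apply, Matrix.smul_apply, Matrix.one_apply, lapOf, degree, tridiag]
      split_ifs <;> simp_all
    · simp only [Matrix.sub_apply, Matrix.smul_apply, Matrix.one_apply, lapOf, tridiag, pathAdj]
      simp [hij, neg_ite]
  rw [Zdet, key, det_tridiag_add_two, ← det_tridiag_grounded, ← det_tridiag_grounded]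
  simp

/-- The matrix `a • 1 - b • P`, where `P` is the permutation matrix of the cyclic shift. -/
def cyclicBidiag (n : ℕ) [NeZero n] (a b : ℝ) : Matrix (Fin n) (Fin n) ℝ := fun i j =>
  (if i = j then a else 0) - if i + 1 = j then b else 0

lemma det_cyclicBidiag (n : ℕ) (a b : ℝ) :
    (cyclicBidiag (n + 2) a b).det = a ^ (n + 2) - b ^ (n + 2) := by
  have succ_iff (i j : Fin (n + 2)) :
      i + 1 = j ↔ if (i : ℕ) = n + 1 then (j : ℕ) = 0 else (i : ℕ) + 1 = j := by
    rw [Fin.ext_iff, Fin.val_add_one]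
    simp only [Fin.ext_iff, Fin.val_last]
    split_ifs <;> omega
  have minor₀ : ((cyclicBidiag (n + 2) a b).submatrix (Fin.succAbove 0) Fin.succ).det =
      a ^ (n + 1) := by
    rw [Matrix.det_of_isUpperTriangular]
    · simp [cyclicBidiag, succ_iff]
    · intro i j hij
      have hij : j < i := hij
      simp only [Fin.lt_def] at hij
      simp only [cyclicBidiag, succ_iff, Matrix.submatrix_apply, Fin.succAbove_zero, Fin.ext_iff,
        Fin.val_succ]
      split_ifs <;> first | omega | simp_all
  have minor_last : ((cyclicBidiag (n + 2) a b).submatrix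
      (Fin.succAbove (Fin.last (n + 1))) Fin.succ).det = (-b) ^ (n + 1) := by
    rw [Matrix.det_of_isLowerTriangular]
    · simp [cyclicBidiag, Fin.ext_iff]
    · intro i j hij
      have hij : i < j := hij
      simp only [Fin.lt_def] at hij
      simp only [cyclicBidiag, succ_iff, Matrix.submatrix_apply, Fin.succAbove_last, Fin.ext_iff,
        Fin.val_succ, Fin.val_castSucc]
      split_ifs <;> first | omega | simp
  rw [Matrix.det_succ_column_zero, Fin.sum_univ_succ, Fin.sum_univ_castSucc, Finset.sum_eq_zero,
    minor₀, Fin.succ_last, minor_last]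
  · simp [cyclicBidiag]
    have : (-1 : ℝ) ^ (n + 1) * (-b) ^ (n + 1) = b ^ (n + 1) := by
      rw [← mul_pow]
      simp
    linear_combination -b * this
  · intro i _
    have : (i : ℕ) ≠ n := by omega
    simp [cyclicBidiag, succ_iff, Fin.ext_iff, this]

lemma Zdet_cycAdj {a b q : ℝ} (hab : a * b = 1) (hq : a ^ 2 + b ^ 2 = q + 2) (n : ℕ) :
    Zdet (cycAdj (n + 3)) (fun _ _ => (1 : ℝ)) q = (a ^ (n + 3) - b ^ (n + 3)) ^ 2 := by
  have succ_iff (i j : Fin (n + 3)) :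
      i + 1 = j ↔ if (i : ℕ) = n + 2 then (j : ℕ) = 0 else (i : ℕ) + 1 = j := by
    rw [Fin.ext_iff, Fin.val_add_one]
    simp only [Fin.ext_iff, Fin.val_last]
    split_ifs <;> omega
  have adj (i j : Fin (n + 3)) : (if cycAdj (n + 3) i j ∧ i ≠ j then (1 : ℝ) else 0) =
      (if i + 1 = j then 1 else 0) + if j + 1 = i then 1 else 0 := by
    have h₁ : (j : ℕ) = ((i : ℕ) + 1) % (n + 3) ↔ i + 1 = j := by
      rw [eq_comm, Fin.ext_iff, Fin.val_add, Fin.val_one]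
    have h₂ : (i : ℕ) = ((j : ℕ) + 1) % (n + 3) ↔ j + 1 = i := by
      rw [eq_comm, Fin.ext_iff, Fin.val_add, Fin.val_one]
    simp only [cycAdj, h₁, h₂, succ_iff, Fin.ext_iff, ne_eq]
    split_ifs <;> first | omega | norm_num
  have degree (i : Fin (n + 3)) :
      ∑ z, (if cycAdj (n + 3) i z ∧ i ≠ z then (1 : ℝ) else 0) = 2 := by
    have (z : Fin (n + 3)) : z + 1 = i ↔ z = i - 1 := eq_sub_iff_add_eq.symm
    simp only [adj, Finset.sum_add_distrib, this, Finset.sum_ite_eq, Finset.sum_ite_eq',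
      Finset.mem_univ, if_true]
    norm_num
  have key : q • (1 : Matrix (Fin (n + 3)) (Fin (n + 3)) ℝ) -
      lapOf (cycAdj (n + 3)) (fun _ _ => (1 : ℝ)) =
      cyclicBidiag (n + 3) a b * (cyclicBidiag (n + 3) a b).transpose := by
    ext i j
    have prod : (cyclicBidiag (n + 3) a b * (cyclicBidiag (n + 3) a b).transpose) i j =
        (if i = j then q + 2 else 0) - ((if i + 1 = j then 1 else 0) +
          if j + 1 = i then 1 else 0) := by
      simp only [Matrix.mul_apply, Matrix.transpose_apply, cyclicBidiag, sub_mul, mul_sub,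
        Finset.sum_sub_distrib, ite_mul, zero_mul, Finset.sum_ite_eq, Finset.mem_univ, if_true,
        mul_ite, mul_zero, add_left_inj, ← hq, ← hab]
      have comm : j + 1 = i ↔ i = j + 1 := eq_comm
      simp only [comm]
      split_ifs <;> ring
    rw [prod]
    simp only [Matrix.sub_apply, Matrix.smul_apply, Matrix.one_apply, lapOf, degree]
    rw [adj]
    split_ifs <;> simp <;> ring
  rw [Zdet, key, Matrix.det_mul, Matrix.det_transpose, det_cyclicBidiag, sq]

lemma exists_mul_eq_one_sq_add_sq {q : ℝ} (hq : 0 ≤ q) :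
    ∃ a b : ℝ, a + b ≠ 0 ∧ a * b = 1 ∧ a ^ 2 + b ^ 2 = q + 2 := by
  have h₁ := Real.sq_sqrt hq
  have h₂ := Real.sq_sqrt (show 0 ≤ q + 4 by linarith)
  refine ⟨(√(q + 4) + √q) / 2, (√(q + 4) - √q) / 2, ?_, ?_, ?_⟩
  · have : 0 < √(q + 4) := by positivity
    ring_nf at this ⊢
    exact this.ne'
  · linear_combination h₂ / 4 - h₁ / 4
  · linear_combination h₂ / 2 + h₁ / 2

lemma Zdet_cycAdj_eq_groundedPath {q : ℝ} (hq : 0 ≤ q) (n : ℕ) :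
    Zdet (cycAdj (n + 3)) (fun _ _ => (1 : ℝ)) q =
      groundedPath q (n + 3) + groundedPath q (n + 2) - 2 := by
  obtain ⟨a, b, hne, hab, hsum⟩ := exists_mul_eq_one_sq_add_sq hq
  have h : a ^ (n + 3) * b ^ (n + 3) = 1 := by rw [← mul_pow, hab, one_pow]
  rw [Zdet_cycAdj hab hsum, groundedPath_add_groundedPath hne hab hsum (n + 2)]
  linear_combination -2 * h

/-- **Partition function of cycle graphs.** For `q > 0`,
`Z_{CG_n}(q) = Z_{PG_n}(q) + (2/q)(Z_{PG_n}(q) - Z_{PG_{n-1}}(q)) - 2`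
and `Z_{CG_n}(q) = ∑_{k=1}^n (C(n+k, 2k) + C(n+k-1, 2k)) q^k`. -/
theorem cycle_partition (n : ℕ) (hn : 3 ≤ n) (q : ℝ) (hq : 0 < q) :
    Zdet (cycAdj n) (fun _ _ => (1 : ℝ)) q =
      Zdet (pathAdj n) (fun _ _ => (1 : ℝ)) q +
        (2 / q) * (Zdet (pathAdj n) (fun _ _ => (1 : ℝ)) q -
          Zdet (pathAdj (n - 1)) (fun _ _ => (1 : ℝ)) q) - 2 ∧
    Zdet (cycAdj n) (fun _ _ => (1 : ℝ)) q =
      ∑ k ∈ Finset.Icc 1 n,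
        (((n + k).choose (2 * k) : ℝ) + ((n + k - 1).choose (2 * k) : ℝ)) * q ^ k := by
  obtain ⟨m, rfl⟩ : ∃ m, n = m + 3 := ⟨n - 3, by omega⟩
  constructor
  · rw [Zdet_cycAdj_eq_groundedPath hq.le, show m + 3 - 1 = m + 2 from rfl,
      Zdet_pathAdj q (m + 1), Zdet_pathAdj q m]
    have := groundedPath_add_two q m
    have := groundedPath_add_two q (m + 1)
    field_simp
    grind
  · rw [Zdet_cycAdj_eq_groundedPath hq.le, groundedPath,
      groundedPath_eq_sum_range q (show m + 2 + 1 ≤ m + 3 + 1 by omega), ← Finset.sum_add_distrib,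
      Finset.range_eq_Ico, Finset.sum_eq_sum_Ico_succ_bot (by omega)]
    have : Finset.Ico (0 + 1) (m + 3 + 1) = Finset.Icc 1 (m + 3) := by
      ext
      simp only [Finset.mem_Ico, Finset.mem_Icc]
      omega
    rw [this]
    have (k : ℕ) : m + 3 + k - 1 = m + 2 + k := by omega
    simp only [this, add_mul]
    norm_num

end
end

section
/- Let PG_n be the path graph on n vertices with unit edge weights and let x,y∈{1,…,n} be at distance d=y−x>0. Let S=(S_m)_{m≥0} be the simple random walk on ℤ started at 0. Then for any q>0 and any m∈ℕ the two-point correlation satisfies the upper bound U_q^{(PG_n)}(x,y) ≤ 1 − P(|S_m| > d)·(2/(2+q))^m; and for any m∈ℕ such that P(|S_m| < d/2) ≥ 1/2 it satisfies the lower bound U_q^{(PG_n)}(x,y) ≥ ( 1 − (2/(2+q))^m )² · ( 2·P(|S_m| < d/2) − 1 )². -/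
open Classical Finset Filter

noncomputable section

variable {V : Type*} [Fintype V] [DecidableEq V]

/-- One step of following the parent map of a rooted forest. -/
def fstep (f : V → Option V) : Option V → Option V := fun o => o.bind f

/-- `f : V → Option V` encodes a spanning rooted forest structure: every vertex either is a
root (`f x = none`) or points to its parent, and iterating the parent map from any vertex
eventually reaches a root (i.e. there are no cycles). -/
def IsForest (f : V → Option V) : Prop :=
  ∀ x : V, ∃ n : ℕ, (fstep f)^[n] (some x) = none

/-- `f` is a spanning rooted forest of the directed graph with edge relation `E`:
all its (parent-pointing) edges are edges of the graph. -/
def IsRForest (E : V → V → Prop) (f : V → Option V) : Prop :=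
  IsForest f ∧ ∀ x y : V, f x = some y → E x y

/-- The number of roots (equivalently, of trees) of a rooted forest. -/
def nRoots (f : V → Option V) : ℕ := (univ.filter fun x : V => f x = none).card

/-- The weight `w(F) = ∏_{e ∈ F} w(e)` of a rooted forest. -/
def fWeight (w : V → V → ℝ) (f : V → Option V) : ℝ :=
  ∏ x : V, (f x).elim 1 (fun y => w x y)

/-- Non-normalised forest measure of a set `H` of forests: `∑_{F ∈ H} q^{r(F)} w(F)`,
the sum running over spanning rooted forests of the graph belonging to `H`. -/
def fMeasure (E : V → V → Prop) (w : V → V → ℝ) (q : ℝ) (H : Set (V → Option V)) : ℝ :=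
  ∑ f ∈ univ.filter (fun f : V → Option V => IsRForest E f ∧ f ∈ H),
    q ^ nRoots f * fWeight w f

/-- Partition function `Z(q) = ∑_F q^{r(F)} w(F)`. -/
def Zf (E : V → V → Prop) (w : V → V → ℝ) (q : ℝ) : ℝ := fMeasure E w q Set.univ

/-- Probability `P(Φ_q ∈ H)` for the random spanning rooted forest `Φ_q`. -/
def fProb (E : V → V → Prop) (w : V → V → ℝ) (q : ℝ) (H : Set (V → Option V)) : ℝ :=
  fMeasure E w q H / Zf E w q

/-- Ancestor relation in the forest `f`. -/
def anc (f : V → Option V) : V → V → Prop :=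
  Relation.ReflTransGen (fun a b => f a = some b)

/-- `x` and `y` belong to the same tree of the forest `f` (they have a common ancestor). -/
def SameTree (f : V → Option V) (x y : V) : Prop := ∃ z, anc f x z ∧ anc f y z

/-- Two-point correlation `U_q(x,y)`: the probability that `x` and `y` lie in
different trees of `Φ_q`. -/
def Ucorr (E : V → V → Prop) (w : V → V → ℝ) (q : ℝ) (x y : V) : ℝ :=
  fProb E w q {f | ¬ SameTree f x y}

end

noncomputable section

/-- Partition function of the path graph on `m` vertices with unit weights
(with the convention `Z_{PG_0}(q) = 1`). -/
def ZPath (m : ℕ) (q : ℝ) : ℝ := Zf (pathAdj m) (fun _ _ => (1 : ℝ)) q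

open Finset in
/-- `P(pred(S_m))` for the simple random walk `S` on `ℤ` started at `0`
(sum of `m` i.i.d. uniform `±1` steps). -/
def srwProb (m : ℕ) (pred : ℤ → Prop) : ℝ :=
  ((univ.filter fun s : Fin m → Bool =>
      pred (∑ i : Fin m, if s i then (1 : ℤ) else -1)).card : ℝ) / 2 ^ m

lemma srwProb_zero (p : ℤ → Prop) : srwProb 0 p = if p 0 then 1 else 0 := by
  unfold srwProb
  by_cases h : p 0 <;> simp [h]

lemma srwProb_succ (m : ℕ) (p : ℤ → Prop) :
    srwProb (m + 1) p =
      (srwProb m (fun z => p (z + 1)) + srwProb m (fun z => p (z - 1))) / 2 := by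
  have key : ∀ (k : ℕ) (r : ℤ → Prop), srwProb k r =
      (∑ s : Fin k → Bool, if r (∑ i, if s i then (1 : ℤ) else -1) then (1 : ℝ) else 0) / 2 ^ k := by
    intro k r
    unfold srwProb
    rw [Finset.card_filter]
    push_cast
    rfl
  rw [key, key, key, ← (Fin.consEquiv (fun _ => Bool)).sum_comp, Fintype.sum_prod_type]
  simp only [Fin.consEquiv_apply, Fin.sum_univ_succ, Fin.cons_zero, Fin.cons_succ,
    Fintype.sum_bool, if_true, Bool.false_eq_true, if_false, add_comm (1 : ℤ),
    add_comm (-1 : ℤ), ← sub_eq_add_neg]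
  rw [pow_succ]
  field_simp

lemma srwProb_nonneg (m : ℕ) (p : ℤ → Prop) : 0 ≤ srwProb m p := by
  unfold srwProb
  positivity

lemma srwProb_mono (m : ℕ) {p r : ℤ → Prop} (h : ∀ z, p z → r z) :
    srwProb m p ≤ srwProb m r := by
  unfold srwProb
  gcongr with s
  exact h _

lemma srwProb_not (m : ℕ) (p : ℤ → Prop) : srwProb m (fun z => ¬ p z) = 1 - srwProb m p := by
  induction m generalizing p with
  | zero => by_cases h : p 0 <;> simp [srwProb_zero, h]
  | succ m ih =>
    rw [srwProb_succ, srwProb_succ m p, ih (fun z => p (z + 1)), ih (fun z => p (z - 1))]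
    ring

lemma srwProb_neg (m : ℕ) (p : ℤ → Prop) : srwProb m (fun z => p (-z)) = srwProb m p := by
  induction m generalizing p with
  | zero => simp [srwProb_zero]
  | succ m ih =>
    rw [srwProb_succ, srwProb_succ m p, ← ih (fun z => p (z + 1)), ← ih (fun z => p (z - 1))]
    have h₁ : ∀ z : ℤ, -(z + 1) = -z - 1 := fun z => by ring
    have h₂ : ∀ z : ℤ, -(z - 1) = -z + 1 := fun z => by ring
    simp only [h₁, h₂]
    ring

lemma srwProb_or_le (m : ℕ) (p r : ℤ → Prop) :
    srwProb m (fun z => p z ∨ r z) ≤ srwProb m p + srwProb m r := by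
  induction m generalizing p r with
  | zero =>
    by_cases h : p 0 <;> by_cases h' : r 0 <;> simp [srwProb_zero, h, h']
  | succ m ih =>
    rw [srwProb_succ, srwProb_succ m p, srwProb_succ m r]
    linarith [ih (fun z => p (z + 1)) (fun z => r (z + 1)),
      ih (fun z => p (z - 1)) (fun z => r (z - 1))]

lemma half_le_srwProb_nonneg (m : ℕ) : 1 / 2 ≤ srwProb m (fun z => 0 ≤ z) := by
  have h₁ := srwProb_not m (fun z => 0 ≤ z)
  have h₂ := srwProb_neg m (fun z => 0 ≤ z)
  have h₃ : srwProb m (fun z => ¬ 0 ≤ z) ≤ srwProb m (fun z => 0 ≤ -z) :=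
    srwProb_mono m fun z hz => by omega
  linarith

/-- Exponential tail bound, with the factor `2` of the reflection principle. -/
lemma two_mul_srwProb_lt_le (m k : ℕ) (α : ℝ) :
    2 * srwProb m (fun z => (k : ℤ) < z) ≤ Real.cosh α ^ m * Real.exp (-(k * α)) := by
  induction m generalizing k with
  | zero =>
    have : ¬ ((k : ℤ) < 0) := by omega
    simp only [srwProb_zero, this, if_false, mul_zero]
    positivity
  | succ m ih =>
    rcases k with _ | k
    · have h₁ := srwProb_not (m + 1) (fun z => 0 < z)
      have h₂ := srwProb_neg (m + 1) (fun z => 0 ≤ z)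
      have h₃ := half_le_srwProb_nonneg (m + 1)
      have h₄ : srwProb (m + 1) (fun z => 0 ≤ -z) ≤ srwProb (m + 1) (fun z => ¬ 0 < z) :=
        srwProb_mono _ fun z hz => by omega
      have h₅ : 1 ≤ Real.cosh α ^ (m + 1) := one_le_pow₀ (Real.one_le_cosh α)
      simp only [Nat.cast_zero, zero_mul, neg_zero, Real.exp_zero, mul_one]
      linarith
    · have e₁ : ∀ z : ℤ, ((k + 1 : ℕ) : ℤ) < z + 1 ↔ (k : ℤ) < z := fun z => by omega
      have e₂ : ∀ z : ℤ, ((k + 1 : ℕ) : ℤ) < z - 1 ↔ ((k + 2 : ℕ) : ℤ) < z := fun z => by omega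
      rw [srwProb_succ]
      simp only [e₁, e₂]
      have i₁ := ih k
      have i₂ := ih (k + 2)
      have x₁ : Real.exp (-(k * α)) = Real.exp (-((k + 1 : ℕ) * α)) * Real.exp α := by
        rw [← Real.exp_add]; push_cast; ring_nf
      have x₂ : Real.exp (-((k + 2 : ℕ) * α)) =
          Real.exp (-((k + 1 : ℕ) * α)) * Real.exp (-α) := by
        rw [← Real.exp_add]; push_cast; ring_nf
      rw [x₁] at i₁
      rw [x₂] at i₂
      have x₃ : Real.cosh α ^ (m + 1) * Real.exp (-((k + 1 : ℕ) * α)) =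
          (Real.cosh α ^ m * (Real.exp (-((k + 1 : ℕ) * α)) * Real.exp α) +
            Real.cosh α ^ m * (Real.exp (-((k + 1 : ℕ) * α)) * Real.exp (-α))) / 2 := by
        rw [pow_succ, Real.cosh_eq α]; ring
      rw [x₃]
      linarith

lemma srwProb_lt_abs_le (m k : ℕ) (α : ℝ) :
    srwProb m (fun z => (k : ℤ) < |z|) ≤ Real.cosh α ^ m * Real.exp (-(k * α)) := by
  have h₁ := srwProb_or_le m (fun z => (k : ℤ) < z) (fun z => (k : ℤ) < -z)
  have h₂ := srwProb_neg m (fun z => (k : ℤ) < z)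
  simp only [← lt_abs] at h₁
  linarith [two_mul_srwProb_lt_le m k α]

/-- The Laplace transform of the exit time of the walk from `(-D, D)`, started at `k`, is
`cosh (kα) / cosh (Dα)`; this bounds it by the law of the walk at a fixed time. -/
lemma cosh_div_cosh_le (m D : ℕ) (α : ℝ) (k : ℤ) (hk : |k| ≤ D) :
    Real.cosh (k * α) / Real.cosh (D * α) ≤
      (1 / Real.cosh α) ^ m +
        (1 - (1 / Real.cosh α) ^ m) * (2 * srwProb m (fun z => (D : ℤ) ≤ |k + z|)) := by
  have hc : 0 < 1 / Real.cosh α := by have := Real.cosh_pos α; positivity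
  have hc1 : 1 / Real.cosh α ≤ 1 := by
    rw [div_le_one (Real.cosh_pos α)]; exact Real.one_le_cosh α
  have hpow : ∀ j, (1 / Real.cosh α) ^ j ≤ 1 := fun j => pow_le_one₀ hc.le hc1
  have le1 : ∀ j : ℤ, |j| ≤ D → Real.cosh (j * α) / Real.cosh (D * α) ≤ 1 := by
    intro j hj
    rw [div_le_one (Real.cosh_pos _), Real.cosh_le_cosh, abs_mul, abs_mul, Nat.abs_cast]
    exact mul_le_mul_of_nonneg_right (by exact_mod_cast hj) (abs_nonneg α)
  induction m generalizing k with
  | zero => simpa using le1 k hk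
  | succ m ih =>
    rcases hk.lt_or_eq with hlt | heq
    · have hk' := abs_lt.1 hlt
      have hp : |k + 1| ≤ D := abs_le.2 (by omega)
      have hm : |k - 1| ≤ D := abs_le.2 (by omega)
      have i₁ := ih (k + 1) hp
      have i₂ := ih (k - 1) hm
      rw [srwProb_succ]
      have e₁ : ∀ z : ℤ, k + (z + 1) = k + 1 + z := fun z => by ring
      have e₂ : ∀ z : ℤ, k + (z - 1) = k - 1 + z := fun z => by ring
      simp only [e₁, e₂]
      have n₁ := srwProb_nonneg m (fun z => (D : ℤ) ≤ |k + 1 + z|)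
      have n₂ := srwProb_nonneg m (fun z => (D : ℤ) ≤ |k - 1 + z|)
      set a := srwProb m (fun z => (D : ℤ) ≤ |k + 1 + z|)
      set b := srwProb m (fun z => (D : ℤ) ≤ |k - 1 + z|)
      have hsum : Real.cosh (k * α) / Real.cosh (D * α) = 1 / Real.cosh α *
          ((Real.cosh ((k + 1 : ℤ) * α) / Real.cosh (D * α) +
            Real.cosh ((k - 1 : ℤ) * α) / Real.cosh (D * α)) / 2) := by
        have : Real.cosh ((k + 1 : ℤ) * α) + Real.cosh ((k - 1 : ℤ) * α) =
            2 * (Real.cosh (k * α) * Real.cosh α) := by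
          push_cast
          rw [add_mul, sub_mul, one_mul, Real.cosh_add, Real.cosh_sub]; ring
        rw [← add_div, this]
        have := Real.cosh_pos α
        field_simp
      rw [hsum]
      have := mul_le_mul_of_nonneg_left (div_le_div_of_nonneg_right (add_le_add i₁ i₂)
        (zero_le_two)) hc.le
      refine this.trans ?_
      rw [pow_succ]
      set c := 1 / Real.cosh α
      nlinarith [mul_nonneg (sub_nonneg.2 hc1) (add_nonneg n₁ n₂)]
    · have hhalf : 1 / 2 ≤ srwProb (m + 1) (fun z => (D : ℤ) ≤ |k + z|) := by
        refine (half_le_srwProb_nonneg (m + 1)).trans ?_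
        rcases abs_eq (Int.natCast_nonneg D) |>.1 heq with h | h
        · refine srwProb_mono _ fun z hz => ?_
          rw [h]; exact le_abs.2 (Or.inl (by omega))
        · rw [← srwProb_neg]
          refine srwProb_mono _ fun z hz => ?_
          rw [h]; exact le_abs.2 (Or.inr (by omega))
      nlinarith [hpow (m + 1), le1 k hk]

lemma mul_two_mul_srwProb_sub_one_le (m d D : ℕ) (hD : d ≤ 2 * D) (hD' : 2 * D ≤ d + 1) (α : ℝ) :
    (1 - (1 / Real.cosh α) ^ m) * (2 * srwProb m (fun z => 2 * |z| < (d : ℤ)) - 1) ≤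
      1 - 1 / Real.cosh (D * α) := by
  have h := cosh_div_cosh_le m D α 0 (by simp)
  have e : (fun z : ℤ => (D : ℤ) ≤ |0 + z|) = fun z => ¬ 2 * |z| < (d : ℤ) := by
    funext z
    rw [zero_add, eq_iff_iff]
    omega
  rw [e, srwProb_not] at h
  simp only [Int.cast_zero, zero_mul, Real.cosh_zero] at h
  linarith

lemma nat_mul_sinh_le {β : ℝ} (hβ : 0 ≤ β) (d : ℕ) :
    d * Real.sinh β ≤ Real.sinh (d * β) := by
  induction d with
  | zero => simp
  | succ d ih =>
    have h₁ : 0 ≤ Real.sinh (d * β) := Real.sinh_nonneg_iff.2 (by positivity)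
    have h₂ : 0 ≤ Real.sinh β := Real.sinh_nonneg_iff.2 hβ
    push_cast
    rw [add_mul, add_mul, one_mul, one_mul, Real.sinh_add]
    nlinarith [Real.one_le_cosh β, Real.one_le_cosh (d * β)]

lemma exp_mul_sinh_le {β : ℝ} (hβ : 0 < β) (d : ℕ) {a b : ℝ} (ha : β ≤ a) (hb : β ≤ b) :
    Real.exp (-(d * (2 * β))) * Real.sinh (a + b + 2 * d * β) ≤
      Real.sinh (a + b) + 2 * (Real.sinh β / Real.cosh β) * d * (Real.cosh a * Real.cosh b) := by
  set r := Real.exp (-(2 * β)) with hr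
  have hr0 : 0 < r := Real.exp_pos _
  have hr1 : r ≤ 1 := Real.exp_le_one_iff.2 (by linarith)
  have bern : 1 - r ^ (2 * d) ≤ d * (1 - r ^ 2) := by
    have := one_add_mul_le_pow (a := r ^ 2 - 1) (by nlinarith) d
    rw [pow_mul]
    simp only [add_sub_cancel] at this
    linarith
  have ht : Real.sinh β / Real.cosh β = (1 - r) / (1 + r) := by
    rw [Real.sinh_eq, Real.cosh_eq]
    have : r = Real.exp (-β) * Real.exp (-β) := by rw [← Real.exp_add, hr]; ring_nf
    have e : Real.exp β * Real.exp (-β) = 1 := by rw [← Real.exp_add]; simp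
    have := Real.exp_pos β
    have := Real.exp_pos (-β)
    rw [div_eq_div_iff (by positivity) (by positivity)]
    nlinarith
  have hexp : Real.exp (-(d * (2 * β))) = r ^ d := by
    rw [hr, ← Real.exp_nat_mul]; ring_nf
  have hw : Real.exp (-(a + b)) ≤ r := Real.exp_le_exp.2 (by linarith)
  have hid : Real.exp (-(d * (2 * β))) * Real.sinh (a + b + 2 * d * β) =
      Real.sinh (a + b) + (1 - r ^ (2 * d)) / 2 * Real.exp (-(a + b)) := by
    rw [hexp, Real.sinh_eq, Real.sinh_eq]
    have h₁ : Real.exp (-(a + b + 2 * d * β)) = Real.exp (-(a + b)) * r ^ d := by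
      rw [← hexp, ← Real.exp_add]; ring_nf
    have h₂ : r ^ d * Real.exp (a + b + 2 * d * β) = Real.exp (a + b) := by
      rw [← hexp, ← Real.exp_add]; ring_nf
    rw [h₁, mul_div_assoc', mul_sub, h₂]
    ring
  rw [hid, ht]
  have hcc : 1 ≤ Real.cosh a * Real.cosh b :=
    one_le_mul_of_one_le_of_one_le (Real.one_le_cosh a) (Real.one_le_cosh b)
  have hq : (1 - r ^ 2) / 2 * r ≤ 2 * ((1 - r) / (1 + r)) := by
    rw [mul_div_assoc', le_div_iff₀ (by positivity)]
    have h₁ : 0 ≤ 1 - r := sub_nonneg.2 hr1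
    have h₂ := pow_pos hr0 2
    nlinarith [mul_nonneg h₁ hr0.le, mul_nonneg h₁ h₂.le, mul_nonneg h₁ h₁,
      mul_nonneg (mul_nonneg h₁ h₁) hr0.le, mul_nonneg (mul_nonneg h₁ h₁) h₂.le]
  have h0 : 0 ≤ (1 - r) / (1 + r) := div_nonneg (by linarith) (by linarith)
  calc Real.sinh (a + b) + (1 - r ^ (2 * d)) / 2 * Real.exp (-(a + b))
      ≤ Real.sinh (a + b) + (d * (1 - r ^ 2)) / 2 * r := by
        have : 0 ≤ (d * (1 - r ^ 2)) / 2 := by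
          have : 0 ≤ 1 - r ^ 2 := by nlinarith
          positivity
        gcongr
    _ = Real.sinh (a + b) + d * ((1 - r ^ 2) / 2 * r) := by ring
    _ ≤ Real.sinh (a + b) + d * (2 * ((1 - r) / (1 + r)) * (Real.cosh a * Real.cosh b)) := by
        have := hq.trans (le_mul_of_one_le_right (by positivity) hcc)
        have := mul_le_mul_of_nonneg_left this d.cast_nonneg
        linarith
    _ = _ := by ring

lemma sinh_add_le_mul_sinh {β : ℝ} (hβ : 0 < β) {d : ℕ} (hd : 1 ≤ d) {a b : ℝ} (ha : β ≤ a)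
    (hb : β ≤ b) :
    Real.sinh (a + b) + 2 * (Real.sinh β / Real.cosh β) * d * (Real.cosh a * Real.cosh b) ≤
      2 / (1 + Real.cosh ((d + 1) * β)) * Real.sinh (a + b + 2 * d * β) := by
  set C := Real.cosh ((d + 1) * β) with hC
  have hC1 : 1 ≤ C := Real.one_le_cosh _
  have hd' : (1 : ℝ) ≤ d := by exact_mod_cast hd
  have hs : 0 < Real.sinh β := Real.sinh_pos_iff.2 hβ
  have hc : 0 < Real.cosh β := Real.cosh_pos β
  set e := a + b - β with he
  have he0 : 0 ≤ Real.sinh e := Real.sinh_nonneg_iff.2 (by linarith)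
  have hce : 0 < Real.cosh e := Real.cosh_pos e
  have hprod : Real.cosh a * Real.cosh b ≤ Real.cosh β * Real.cosh e := by
    have h₁ : Real.cosh (a - b) ≤ Real.cosh (e - β) := by
      rw [Real.cosh_le_cosh, abs_le, abs_of_nonneg (by linarith)]
      constructor <;> linarith
    have h₂ : Real.cosh (a + b) = Real.cosh (e + β) := by rw [he]; ring_nf
    rw [Real.cosh_sub, Real.cosh_sub] at h₁
    rw [Real.cosh_add, Real.cosh_add] at h₂
    linarith
  have hleft : Real.sinh (a + b) +
      2 * (Real.sinh β / Real.cosh β) * d * (Real.cosh a * Real.cosh b) ≤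
      Real.cosh β * Real.sinh e + Real.sinh β * (2 * d + 1) * Real.cosh e := by
    have h₁ : Real.sinh (a + b) =
        Real.sinh e * Real.cosh β + Real.cosh e * Real.sinh β := by
      rw [← Real.sinh_add, he]; ring_nf
    have h₂ : 2 * (Real.sinh β / Real.cosh β) * d * (Real.cosh a * Real.cosh b) ≤
        2 * (Real.sinh β / Real.cosh β) * d * (Real.cosh β * Real.cosh e) := by gcongr
    have h₃ : 2 * (Real.sinh β / Real.cosh β) * d * (Real.cosh β * Real.cosh e) =
        2 * Real.sinh β * d * Real.cosh e := by field_simp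
    rw [h₁]
    linarith
  have hright : Real.sinh (a + b + 2 * d * β) =
      Real.sinh e * Real.cosh ((2 * d + 1) * β) + Real.cosh e * Real.sinh ((2 * d + 1) * β) := by
    rw [← Real.sinh_add, he]; ring_nf
  have hsd : 0 ≤ Real.sinh (d * β) := Real.sinh_nonneg_iff.2 (by positivity)
  have hsd1 : 0 ≤ Real.sinh ((d + 1) * β) := Real.sinh_nonneg_iff.2 (by positivity)
  have hA : Real.cosh β * (1 + C) ≤ 2 * Real.cosh ((2 * d + 1) * β) := by
    have h₁ : Real.cosh ((2 * d + 1) * β) =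
        Real.cosh (d * β) * C + Real.sinh (d * β) * Real.sinh ((d + 1) * β) := by
      rw [hC, ← Real.cosh_add]; ring_nf
    have h₂ : Real.cosh β ≤ Real.cosh (d * β) := by
      rw [Real.cosh_le_cosh, abs_of_pos hβ, abs_of_nonneg (by positivity)]
      nlinarith
    rw [h₁]
    nlinarith [mul_nonneg hsd hsd1, mul_le_mul_of_nonneg_right h₂ (zero_le_one.trans hC1)]
  have hB : Real.sinh β * (2 * d + 1) * (1 + C) ≤ 2 * Real.sinh ((2 * d + 1) * β) := by
    have h₁ : Real.sinh ((2 * d + 1) * β) = Real.sinh β + 2 * C * Real.sinh (d * β) := by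
      have e₁ : Real.sinh ((2 * d + 1) * β) = Real.sinh ((d + 1) * β + d * β) := by ring_nf
      have e₂ : Real.sinh β = Real.sinh ((d + 1) * β - d * β) := by ring_nf
      rw [e₁, e₂, Real.sinh_add, Real.sinh_sub, hC]
      ring
    have h₂ := nat_mul_sinh_le hβ.le d
    rw [h₁]
    have h₃ : C * (d * Real.sinh β) ≤ C * Real.sinh (d * β) := by gcongr
    nlinarith [mul_nonneg hs.le (mul_nonneg (by linarith : (0:ℝ) ≤ 2 * d - 1) (sub_nonneg.2 hC1))]
  rw [hright]
  refine hleft.trans ?_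
  rw [div_mul_eq_mul_div, le_div_iff₀ (by linarith)]
  nlinarith [mul_le_mul_of_nonneg_right hA he0, mul_le_mul_of_nonneg_right hB hce.le]

lemma sq_one_sub_inv_le {C : ℝ} (hC : 1 ≤ C) : (1 - 1 / C) ^ 2 ≤ 1 - 2 / (1 + C) := by
  have h : (0 : ℝ) < C := by linarith
  have h' : (0 : ℝ) < 1 + C := by linarith
  have : 1 - 2 / (1 + C) - (1 - 1 / C) ^ 2 = (C - 1) / (C ^ 2 * (1 + C)) := by
    field_simp
    ring
  have : 0 ≤ (C - 1) / (C ^ 2 * (1 + C)) := div_nonneg (by linarith) (by positivity)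
  linarith

/-- Weight of the consecutive letters `s, t` at positions `i, i + 1` of the word of a rooted forest
on a path, where `none`, `some true`, `some false` stand for a root, a vertex pointing to its
successor and a vertex pointing to its predecessor. The edges `{i, i + 1}` with `P i` must be
present. -/
def letterKernel (P : ℕ → Prop) (q : ℝ) (i : ℕ) (s t : Option Bool) : ℝ :=
  (if t = none then q else 1) *
    if ¬ (s = some true ∧ t = some false) ∧ (P i → s = some true ∨ t = some false) then 1 else 0

/-- Weight of the first letter of the word of a rooted forest on a path. -/
def firstLetter (q : ℝ) (t : Option Bool) : ℝ :=
  (if t = none then q else 1) * if t = some false then 0 else 1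

/-- Total weight of the words of length `n + 1` with last letter `t`. -/
def wordVec (P : ℕ → Prop) (q : ℝ) : ℕ → Option Bool → ℝ
  | 0, t => firstLetter q t
  | n + 1, t => ∑ s, wordVec P q n s * letterKernel P q n s t

lemma sum_words (P : ℕ → Prop) (q : ℝ) (N : ℕ) (g : Option Bool → ℝ) :
    ∑ w : Fin (N + 1) → Option Bool, firstLetter q (w 0) *
        (∏ i : Fin N, letterKernel P q i (w i.castSucc) (w i.succ)) * g (w (Fin.last N)) =
      ∑ t, wordVec P q N t * g t := by
  induction N generalizing g with
  | zero =>
    rw [← (Equiv.funUnique (Fin 1) (Option Bool)).symm.sum_comp]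
    simp [wordVec]
  | succ N ih =>
    rw [← (Fin.snocEquiv (fun _ => Option Bool)).sum_comp, Fintype.sum_prod_type]
    have step : ∀ (t : Option Bool) (w : Fin (N + 1) → Option Bool),
        firstLetter q (Fin.snocEquiv (fun _ => Option Bool) (t, w) 0) *
            (∏ i : Fin (N + 1), letterKernel P q i
              (Fin.snocEquiv (fun _ => Option Bool) (t, w) i.castSucc)
              (Fin.snocEquiv (fun _ => Option Bool) (t, w) i.succ)) *
            g (Fin.snocEquiv (fun _ => Option Bool) (t, w) (Fin.last (N + 1))) =
          firstLetter q (w 0) *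
            (∏ i : Fin N, letterKernel P q i (w i.castSucc) (w i.succ)) *
            (letterKernel P q N (w (Fin.last N)) t * g t) := by
      intro t w
      simp only [Fin.snocEquiv_apply, Fin.prod_univ_castSucc, Fin.snoc_castSucc, Fin.succ_last,
        Fin.succ_castSucc, Fin.snoc_last, ← Fin.castSucc_zero (n := N + 1), Fin.val_castSucc,
        Fin.val_last]
      ring
    simp only [step]
    refine Finset.sum_congr rfl fun t _ => ?_
    rw [ih (fun s => letterKernel P q N s t * g t), wordVec, Finset.sum_mul]
    exact Finset.sum_congr rfl fun s _ => by ring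

/-- The rooted forests containing all edges `{i, i + 1}` with `P i`. -/
def containsEdges (N : ℕ) (P : ℕ → Prop) : Set (Fin (N + 1) → Option (Fin (N + 1))) :=
  {f | ∀ i : Fin N, P i → f i.castSucc = some i.succ ∨ f i.succ = some i.castSucc}

lemma exists_iterate_of_eq_some {V : Type*} {f : V → Option V} {x y : V} (h : f x = some y)
    (hy : ∃ k, (fstep f)^[k] (some y) = none) : ∃ k, (fstep f)^[k] (some x) = none := by
  obtain ⟨k, hk⟩ := hy
  exact ⟨k + 1, by rw [Function.iterate_succ_apply]; simpa [fstep, h] using hk⟩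

lemma exists_iterate_of_eq_none {V : Type*} {f : V → Option V} {x : V} (h : f x = none) :
    ∃ k, (fstep f)^[k] (some x) = none := ⟨1, by simp [fstep, h]⟩

/-- A rooted forest on a path is a parent map without cycles of length two. -/
lemma isRForest_pathAdj_iff {N : ℕ} {f : Fin (N + 1) → Option (Fin (N + 1))} :
    IsRForest (pathAdj (N + 1)) f ↔ (∀ x y, f x = some y → pathAdj (N + 1) x y) ∧
      ∀ i : Fin N, ¬ (f i.castSucc = some i.succ ∧ f i.succ = some i.castSucc) := by
  constructor
  · rintro ⟨hf, hE⟩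
    refine ⟨hE, fun i ⟨h₁, h₂⟩ => ?_⟩
    obtain ⟨k, hk⟩ := hf i.castSucc
    have : ∀ j, (fstep f)^[j] (some i.castSucc) = some i.castSucc ∨
        (fstep f)^[j] (some i.castSucc) = some i.succ := by
      intro j
      induction j with
      | zero => simp
      | succ j ih =>
        rw [Function.iterate_succ_apply']
        rcases ih with h | h <;> rw [h] <;> simp [fstep, h₁, h₂]
    rcases this k with h | h <;> simp [hk] at h
  · rintro ⟨hE, hc⟩
    have hc' : ∀ a b : Fin (N + 1), (a : ℕ) + 1 = b → f a = some b → f b ≠ some a := by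
      intro a b hab ha hb
      have hb' := b.isLt
      have e : (⟨a, by omega⟩ : Fin N).succ = b := Fin.ext hab
      exact hc ⟨a, by omega⟩ ⟨e.symm ▸ ha, e.symm ▸ hb⟩
    have right : ∀ k : ℕ, ∀ a b : Fin (N + 1), N - (a : ℕ) = k → (a : ℕ) + 1 = b →
        f a = some b → ∃ k, (fstep f)^[k] (some a) = none := by
      intro k
      induction k with
      | zero => intro a b hk hab h; have := b.isLt; omega
      | succ k ih =>
        intro a b hk hab h
        refine exists_iterate_of_eq_some h ?_
        rcases hb : f b with _ | c
        · exact exists_iterate_of_eq_none hb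
        · rcases hE _ _ hb with h' | h'
          · exact ih b c (by omega) h' hb
          · have : c = a := Fin.ext (by omega)
            exact absurd (this ▸ hb) (hc' a b hab h)
    have left : ∀ k : ℕ, ∀ a b : Fin (N + 1), (a : ℕ) = k → (b : ℕ) + 1 = a →
        f a = some b → ∃ k, (fstep f)^[k] (some a) = none := by
      intro k
      induction k with
      | zero => intro a b hk hab h; omega
      | succ k ih =>
        intro a b hk hab h
        refine exists_iterate_of_eq_some h ?_
        rcases hb : f b with _ | c
        · exact exists_iterate_of_eq_none hb
        · rcases hE _ _ hb with h' | h'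
          · have : c = a := Fin.ext (by omega)
            exact absurd h (hc' b a hab (this ▸ hb))
          · exact ih b c (by omega) h' hb
    refine ⟨fun a => ?_, hE⟩
    rcases ha : f a with _ | b
    · exact exists_iterate_of_eq_none ha
    · rcases hE _ _ ha with h | h
      · exact right _ a b rfl h ha
      · exact left _ a b rfl h ha

lemma SameTree.trans {V : Type*} {f : V → Option V} {x y z : V} (h₁ : SameTree f x y)
    (h₂ : SameTree f y z) : SameTree f x z := by
  obtain ⟨a, hxa, hya⟩ := h₁
  obtain ⟨b, hyb, hzb⟩ := h₂
  have hu : Relator.RightUnique (fun a b => f a = some b) := fun a b c h h' =>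
    Option.some.inj (h.symm.trans h')
  rcases Relation.ReflTransGen.total_of_right_unique hu hya hyb with h | h
  · exact ⟨b, hxa.trans h, hzb⟩
  · exact ⟨a, hxa, hzb.trans h⟩

lemma anc_induction {V : Type*} {f : V → Option V} {p : V → Prop}
    (hp : ∀ a c, f a = some c → p a → p c) {x z : V} (h : anc f x z) (hx : p x) : p z := by
  induction h with
  | refl => exact hx
  | tail _ hbc ih => exact hp _ _ hbc ih

lemma sameTree_iff {N : ℕ} {f : Fin (N + 1) → Option (Fin (N + 1))}
    (hf : ∀ x y, f x = some y → pathAdj (N + 1) x y) {x y : Fin (N + 1)} (hxy : x ≤ y) :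
    SameTree f x y ↔ f ∈ containsEdges N (fun i => (x : ℕ) ≤ i ∧ i < (y : ℕ)) := by
  constructor
  · rintro ⟨z, hxz, hyz⟩ i ⟨hxi, hiy⟩
    by_contra! hne
    have hl : (z : ℕ) ≤ i := by
      refine anc_induction (p := fun a : Fin (N + 1) => (a : ℕ) ≤ i) (fun a c hac ha => ?_) hxz hxi
      by_contra! hc
      have := hf _ _ hac
      have hai : (a : ℕ) = i := by rcases this with h | h <;> omega
      have hci : (c : ℕ) = i + 1 := by rcases this with h | h <;> omega
      refine hne.1 ?_
      convert hac using 2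
      · exact Fin.ext (by simpa using hai.symm)
      · exact Fin.ext (by simpa using hci.symm)
    have hr : (i : ℕ) < z := by
      refine anc_induction (p := fun a : Fin (N + 1) => (i : ℕ) < a) (fun a c hac ha => ?_) hyz hiy
      by_contra! hc
      have := hf _ _ hac
      have hai : (a : ℕ) = i + 1 := by rcases this with h | h <;> omega
      have hci : (c : ℕ) = i := by rcases this with h | h <;> omega
      refine hne.2 ?_
      convert hac using 2
      · exact Fin.ext (by simpa using hai.symm)
      · exact Fin.ext (by simpa using hci.symm)
    omega
  · intro h
    have key : ∀ k : ℕ, ∀ hk : (x : ℕ) + k < N + 1, (x : ℕ) + k ≤ y →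
        SameTree f x ⟨x + k, hk⟩ := by
      intro k
      induction k with
      | zero => exact fun _ _ => ⟨x, .refl, .refl⟩
      | succ k ih =>
        intro hk hky
        refine (ih (by omega) (by omega)).trans ?_
        rcases h ⟨x + k, by omega⟩ ⟨by simp, by simp; omega⟩ with h' | h'
        · exact ⟨_, .single h', .refl⟩
        · exact ⟨_, .refl, .single h'⟩
    have := key (y - x) (by omega) (by omega)
    convert this using 1
    exact Fin.ext (by simp; omega)

/-- The parent map described by a word. -/
def wordParent {n : ℕ} (w : Fin n → Option Bool) (i : Fin n) : Option (Fin n) :=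
  match w i with
  | none => none
  | some true => if h : (i : ℕ) + 1 < n then some ⟨i + 1, h⟩ else none
  | some false => if 0 < (i : ℕ) then some ⟨i - 1, by omega⟩ else none

/-- The word of a parent map. -/
def parentWord {n : ℕ} (f : Fin n → Option (Fin n)) (i : Fin n) : Option Bool :=
  (f i).map fun j => decide (i < j)

lemma pathAdj_of_wordParent {n : ℕ} {w : Fin n → Option Bool} {x y : Fin n}
    (h : wordParent w x = some y) : pathAdj n x y := by
  unfold wordParent at h
  unfold pathAdj
  split at h
  · simp at h
  · split_ifs at h with h'
    cases h
    exact Or.inl rfl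
  · split_ifs at h with h'
    cases h
    exact Or.inr (by simp; omega)

lemma parentWord_wordParent {N : ℕ} {w : Fin (N + 1) → Option Bool} (h₀ : w 0 ≠ some false)
    (h₁ : w (Fin.last N) ≠ some true) : parentWord (wordParent w) = w := by
  funext i
  unfold parentWord wordParent
  rcases hw : w i with _ | _ | _
  · simp
  · have : 0 < (i : ℕ) := by
      by_contra! h
      exact h₀ (by rw [← hw]; congr 1; exact Fin.ext (by simp; omega))
    simp only [this, if_true, Option.map_some, Option.some.injEq, decide_eq_false_iff_not,
      Fin.lt_def]
    omega
  · have : (i : ℕ) + 1 < N + 1 := by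
      by_contra! h
      exact h₁ (by rw [← hw]; congr 1; exact Fin.ext (by simp; omega))
    simp only [this, dif_pos, Option.map_some, Option.some.injEq, decide_eq_true_eq, Fin.lt_def]
    omega

lemma wordParent_parentWord {n : ℕ} {f : Fin n → Option (Fin n)}
    (hf : ∀ x y, f x = some y → pathAdj n x y) : wordParent (parentWord f) = f := by
  funext i
  unfold parentWord wordParent
  rcases hi : f i with _ | j
  · simp only [hi, Option.map_none]
  · have hj := j.isLt
    rcases hf _ _ hi with h | h
    · have : i < j := Fin.lt_def.2 (by omega)
      have h' : (i : ℕ) + 1 < n := by omega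
      simp only [hi, Option.map_some, this, decide_true, h', dif_pos, Option.some.injEq]
      exact Fin.ext h
    · have : ¬ i < j := fun h' => by have := Fin.lt_def.1 h'; omega
      have h' : 0 < (i : ℕ) := by omega
      simp only [hi, Option.map_some, this, decide_false, h', if_true, Option.some.injEq]
      exact Fin.ext (Nat.sub_eq_of_eq_add h.symm)

lemma parentWord_castSucc_eq {N : ℕ} {f : Fin (N + 1) → Option (Fin (N + 1))}
    (hf : ∀ x y, f x = some y → pathAdj (N + 1) x y) (i : Fin N) :
    parentWord f i.castSucc = some true ↔ f i.castSucc = some i.succ := by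
  unfold parentWord
  rcases hi : f i.castSucc with _ | j
  · simp
  · have := hf _ _ hi
    simp only [pathAdj, Fin.val_castSucc] at this
    simp only [Option.map_some, Option.some.injEq, decide_eq_true_eq, Fin.lt_def, Fin.ext_iff,
      Fin.val_castSucc, Fin.val_succ]
    omega

lemma parentWord_succ_eq {N : ℕ} {f : Fin (N + 1) → Option (Fin (N + 1))}
    (hf : ∀ x y, f x = some y → pathAdj (N + 1) x y) (i : Fin N) :
    parentWord f i.succ = some false ↔ f i.succ = some i.castSucc := by
  unfold parentWord
  rcases hi : f i.succ with _ | j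
  · simp
  · have := hf _ _ hi
    simp only [pathAdj, Fin.val_succ] at this
    simp only [Option.map_some, Option.some.injEq, decide_eq_false_iff_not, Fin.lt_def,
      Fin.ext_iff, Fin.val_castSucc, Fin.val_succ]
    omega

lemma parentWord_zero_ne {N : ℕ} {f : Fin (N + 1) → Option (Fin (N + 1))}
    (hf : ∀ x y, f x = some y → pathAdj (N + 1) x y) : parentWord f 0 ≠ some false := by
  unfold parentWord
  rcases hi : f 0 with _ | j
  · simp
  · have := hf _ _ hi
    simp only [pathAdj, Fin.val_zero] at this
    simp only [Option.map_some, ne_eq, Option.some.injEq, decide_eq_false_iff_not, Fin.lt_def,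
      Fin.val_zero]
    omega

lemma parentWord_last_ne {N : ℕ} (f : Fin (N + 1) → Option (Fin (N + 1))) :
    parentWord f (Fin.last N) ≠ some true := by
  unfold parentWord
  rcases hi : f (Fin.last N) with _ | j
  · simp
  · have := j.isLt
    simp only [Option.map_some, ne_eq, Option.some.injEq, decide_eq_true_eq, Fin.lt_def,
      Fin.val_last]
    omega

/-- The words of the rooted forests containing all edges `{i, i + 1}` with `P i`. -/
def IsForestWord (N : ℕ) (P : ℕ → Prop) (w : Fin (N + 1) → Option Bool) : Prop :=
  w 0 ≠ some false ∧ w (Fin.last N) ≠ some true ∧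
    ∀ i : Fin N, ¬ (w i.castSucc = some true ∧ w i.succ = some false) ∧
      (P i → w i.castSucc = some true ∨ w i.succ = some false)

lemma isForestWord_parentWord_iff {N : ℕ} {P : ℕ → Prop} {f : Fin (N + 1) → Option (Fin (N + 1))}
    (hf : ∀ x y, f x = some y → pathAdj (N + 1) x y) :
    IsForestWord N P (parentWord f) ↔
      IsRForest (pathAdj (N + 1)) f ∧ f ∈ containsEdges N P := by
  simp only [IsForestWord, parentWord_castSucc_eq hf, parentWord_succ_eq hf, isRForest_pathAdj_iff,
    containsEdges, Set.mem_ofPred_eq, parentWord_zero_ne hf, parentWord_last_ne f, ne_eq,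
    not_false_eq_true, true_and, forall_and]
  exact ⟨fun h => ⟨⟨hf, h.1⟩, h.2⟩, fun h => ⟨h.1.2, h.2⟩⟩

lemma word_weight_eq (N : ℕ) (P : ℕ → Prop) (q : ℝ) (w : Fin (N + 1) → Option Bool) :
    firstLetter q (w 0) * (∏ i : Fin N, letterKernel P q i (w i.castSucc) (w i.succ)) *
        (if w (Fin.last N) = some true then 0 else 1) =
      if IsForestWord N P w then q ^ (univ.filter fun i => w i = none).card else 0 := by
  have hroots : q ^ (univ.filter fun i => w i = none).card =
      (if w 0 = none then q else 1) * ∏ i : Fin N, if w i.succ = none then q else 1 := by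
    rw [← Fin.prod_univ_succ (fun i => if w i = none then q else 1), Finset.prod_ite]
    simp
  rw [hroots]
  unfold firstLetter letterKernel
  rw [Finset.prod_mul_distrib, Finset.prod_boole]
  simp only [Finset.mem_univ, forall_const]
  by_cases h₀ : w 0 = some false
  · simp [h₀, IsForestWord]
  by_cases h₁ : w (Fin.last N) = some true
  · simp [h₁, IsForestWord]
  by_cases h₂ : ∀ i : Fin N, ¬ (w i.castSucc = some true ∧ w i.succ = some false) ∧
      (P i → w i.castSucc = some true ∨ w i.succ = some false)
  · have hw : IsForestWord N P w := ⟨h₀, h₁, h₂⟩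
    rw [if_pos h₂, if_pos hw, if_neg h₀, if_neg h₁]
    ring
  · have hw : ¬ IsForestWord N P w := fun h => h₂ h.2.2
    rw [if_neg h₂, if_neg hw]
    ring

lemma fMeasure_containsEdges (N : ℕ) (P : ℕ → Prop) (q : ℝ) :
    fMeasure (pathAdj (N + 1)) (fun _ _ => (1 : ℝ)) q (containsEdges N P) =
      wordVec P q N none + wordVec P q N (some false) := by
  have h := sum_words P q N (fun t => if t = some true then 0 else 1)
  simp only [word_weight_eq] at h
  rw [← Finset.sum_filter] at h
  trans ∑ t, wordVec P q N t * if t = some true then 0 else 1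
  swap
  · simp [Fintype.sum_option]
  rw [← h]
  unfold fMeasure
  have hadj : ∀ f ∈ univ.filter (fun f => IsRForest (pathAdj (N + 1)) f ∧ f ∈ containsEdges N P),
      ∀ x y, f x = some y → pathAdj (N + 1) x y := fun f hf => (Finset.mem_filter.1 hf).2.1.2
  have hword : ∀ w ∈ univ.filter (fun w => IsForestWord N P w),
      parentWord (wordParent w) = w := fun w hw =>
    parentWord_wordParent (Finset.mem_filter.1 hw).2.1 (Finset.mem_filter.1 hw).2.2.1
  refine Finset.sum_nbij' parentWord wordParent (fun f hf => ?_) (fun w hw => ?_)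
    (fun f hf => wordParent_parentWord (hadj f hf)) hword (fun f _ => ?_)
  · exact Finset.mem_filter.2 ⟨Finset.mem_univ _,
      (isForestWord_parentWord_iff (hadj f hf)).2 (Finset.mem_filter.1 hf).2⟩
  · refine Finset.mem_filter.2 ⟨Finset.mem_univ _,
      (isForestWord_parentWord_iff fun x y => pathAdj_of_wordParent).1 ?_⟩
    rw [hword w hw]
    exact (Finset.mem_filter.1 hw).2
  · have : fWeight (fun _ _ => (1 : ℝ)) f = 1 :=
      Finset.prod_eq_one fun x _ => by cases f x <;> rfl
    rw [this, mul_one, nRoots]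
    simp [parentWord]

lemma wordVec_succ_of_not {P : ℕ → Prop} (q : ℝ) {n : ℕ} (h : ¬ P n) :
    wordVec P q (n + 1) none + wordVec P q (n + 1) (some false) =
        (q + 1) * (wordVec P q n none + wordVec P q n (some false)) +
          q * wordVec P q n (some true) ∧
      wordVec P q (n + 1) (some true) =
        (wordVec P q n none + wordVec P q n (some false)) + wordVec P q n (some true) := by
  constructor <;> simp [wordVec, letterKernel, Fintype.sum_option, h] <;> ring

lemma wordVec_succ_of {P : ℕ → Prop} (q : ℝ) {n : ℕ} (h : P n) :
    wordVec P q (n + 1) none + wordVec P q (n + 1) (some false) =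
        (wordVec P q n none + wordVec P q n (some false)) + q * wordVec P q n (some true) ∧
      wordVec P q (n + 1) (some true) = wordVec P q n (some true) := by
  constructor
  · simp [wordVec, letterKernel, Fintype.sum_option, h]
    ring
  · simp [wordVec, letterKernel, h]

lemma wordVec_initial (P : ℕ → Prop) {β : ℝ} {i : ℕ} (h : ∀ j < i, ¬ P j) :
    wordVec P (4 * Real.sinh β ^ 2) i none + wordVec P (4 * Real.sinh β ^ 2) i (some false) =
        2 * (Real.sinh β / Real.cosh β) * Real.sinh ((2 * i + 1) * β + β) ∧
      wordVec P (4 * Real.sinh β ^ 2) i (some true) =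
        Real.cosh ((2 * i + 1) * β) / Real.cosh β := by
  have hc := Real.cosh_pos β
  induction i with
  | zero =>
    simp only [wordVec, firstLetter, Nat.cast_zero, mul_zero, zero_add, one_mul, Real.sinh_add,
      div_self hc.ne']
    simp
    field_simp
    ring
  | succ i ih =>
    obtain ⟨h₁, h₂⟩ := wordVec_succ_of_not (4 * Real.sinh β ^ 2) (h i (Nat.lt_succ_self i))
    obtain ⟨ih₁, ih₂⟩ := ih fun j hj => h j (hj.trans (Nat.lt_succ_self i))
    have e : (2 * ((i + 1 : ℕ) : ℝ) + 1) * β = (2 * i + 1) * β + β + β := by push_cast; ring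
    rw [h₁, h₂, ih₁, ih₂, e]
    have hsq := Real.cosh_sq β
    have hcube : Real.cosh β ^ 3 = Real.cosh β * (Real.sinh β ^ 2 + 1) := by rw [← hsq]; ring
    generalize (2 * (i : ℝ) + 1) * β = u
    simp only [Real.sinh_add, Real.cosh_add]
    constructor <;> field_simp <;> ring_nf <;> simp only [hsq, hcube] <;> ring_nf

lemma wordVec_required (P : ℕ → Prop) (q : ℝ) {x k : ℕ} (h : ∀ j < k, P (x + j)) :
    wordVec P q (x + k) none + wordVec P q (x + k) (some false) =
        (wordVec P q x none + wordVec P q x (some false)) + k * q * wordVec P q x (some true) ∧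
      wordVec P q (x + k) (some true) = wordVec P q x (some true) := by
  induction k with
  | zero => simp
  | succ k ih =>
    obtain ⟨h₁, h₂⟩ := wordVec_succ_of q (h k (Nat.lt_succ_self k))
    obtain ⟨ih₁, ih₂⟩ := ih fun j hj => h j (hj.trans (Nat.lt_succ_self k))
    rw [← add_assoc, h₁, h₂, ih₁, ih₂]
    push_cast
    exact ⟨by ring, rfl⟩

lemma wordVec_final (P : ℕ → Prop) {β : ℝ} (hβ : 0 < β) {y k : ℕ} (h : ∀ j < k, ¬ P (y + j)) :
    wordVec P (4 * Real.sinh β ^ 2) (y + k) none +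
          wordVec P (4 * Real.sinh β ^ 2) (y + k) (some false) =
        (wordVec P (4 * Real.sinh β ^ 2) y none +
            wordVec P (4 * Real.sinh β ^ 2) y (some false)) *
              (Real.cosh ((2 * k + 1) * β) / Real.cosh β) +
          wordVec P (4 * Real.sinh β ^ 2) y (some true) *
            (2 * (Real.sinh β / Real.cosh β) * Real.sinh ((2 * k + 1) * β - β)) ∧
      wordVec P (4 * Real.sinh β ^ 2) (y + k) (some true) =
        (wordVec P (4 * Real.sinh β ^ 2) y none +
            wordVec P (4 * Real.sinh β ^ 2) y (some false)) *
              (Real.sinh ((2 * k + 1) * β - β) / (2 * Real.sinh β * Real.cosh β)) +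
          wordVec P (4 * Real.sinh β ^ 2) y (some true) *
            (Real.cosh ((2 * k + 1) * β - β - β) / Real.cosh β) := by
  have hc := Real.cosh_pos β
  have hs : 0 < Real.sinh β := Real.sinh_pos_iff.2 hβ
  induction k with
  | zero => simp [hc.ne']
  | succ k ih =>
    obtain ⟨h₁, h₂⟩ := wordVec_succ_of_not (4 * Real.sinh β ^ 2) (h k (Nat.lt_succ_self k))
    obtain ⟨ih₁, ih₂⟩ := ih fun j hj => h j (hj.trans (Nat.lt_succ_self k))
    have e : (2 * ((k + 1 : ℕ) : ℝ) + 1) * β = (2 * k + 1) * β + β + β := by push_cast; ring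
    rw [← add_assoc, h₁, h₂, ih₁, ih₂, e]
    have hsq := Real.cosh_sq β
    generalize (2 * (k : ℝ) + 1) * β = u
    generalize wordVec P (4 * Real.sinh β ^ 2) y none +
      wordVec P (4 * Real.sinh β ^ 2) y (some false) = a
    generalize wordVec P (4 * Real.sinh β ^ 2) y (some true) = b
    rw [add_sub_cancel_right, add_sub_cancel_right]
    simp only [Real.sinh_add, Real.cosh_add, Real.sinh_sub, Real.cosh_sub]
    constructor <;> field_simp <;> ring_nf <;> simp only [hsq] <;> ring_nf

/-- The two-point correlation on the path, with `q = 4 sinh² β`. -/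
lemma Ucorr_pathAdj (x d k : ℕ) {β : ℝ} (hβ : 0 < β) :
    Ucorr (pathAdj (x + d + k + 1)) (fun _ _ => (1 : ℝ)) (4 * Real.sinh β ^ 2)
        ⟨x, by omega⟩ ⟨x + d, by omega⟩ =
      1 - (Real.sinh ((2 * x + 1) * β + (2 * k + 1) * β) +
          2 * (Real.sinh β / Real.cosh β) * d *
            (Real.cosh ((2 * x + 1) * β) * Real.cosh ((2 * k + 1) * β))) /
        Real.sinh ((2 * x + 1) * β + (2 * k + 1) * β + 2 * d * β) := by
  have hc := Real.cosh_pos β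
  have hs : 0 < Real.sinh β := Real.sinh_pos_iff.2 hβ
  set q := 4 * Real.sinh β ^ 2 with hq
  set P : ℕ → Prop := fun i => x ≤ i ∧ i < x + d with hP
  have hZ : Zf (pathAdj (x + d + k + 1)) (fun _ _ => (1 : ℝ)) q =
      2 * (Real.sinh β / Real.cosh β) *
        Real.sinh ((2 * x + 1) * β + (2 * k + 1) * β + 2 * d * β) := by
    have : (Set.univ : Set (Fin (x + d + k + 1) → Option (Fin (x + d + k + 1)))) =
        containsEdges (x + d + k) fun _ => False := by ext; simp [containsEdges]
    rw [Zf, this, fMeasure_containsEdges,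
      (wordVec_initial (fun _ => False) (β := β) fun _ _ => not_false).1]
    congr 2
    push_cast
    ring
  have hZpos : 0 < Real.sinh ((2 * x + 1) * β + (2 * k + 1) * β + 2 * d * β) :=
    Real.sinh_pos_iff.2 (by positivity)
  have hsame : fMeasure (pathAdj (x + d + k + 1)) (fun _ _ => (1 : ℝ)) q
      (containsEdges (x + d + k) P) = 2 * (Real.sinh β / Real.cosh β) *
        (Real.sinh ((2 * x + 1) * β + (2 * k + 1) * β) +
          2 * (Real.sinh β / Real.cosh β) * d *
            (Real.cosh ((2 * x + 1) * β) * Real.cosh ((2 * k + 1) * β))) := by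
    obtain ⟨i₁, i₂⟩ := wordVec_initial P (β := β) (i := x) fun j hj h => by
      have := h.1; omega
    obtain ⟨r₁, r₂⟩ := wordVec_required P q (x := x) (k := d) fun j hj =>
      ⟨by omega, by omega⟩
    rw [fMeasure_containsEdges, (wordVec_final P hβ (y := x + d) (k := k) fun j hj h => by
      have := h.2; omega).1, r₁, r₂, i₁, i₂, hq]
    generalize (2 * (x : ℝ) + 1) * β = a
    generalize (2 * (k : ℝ) + 1) * β = b
    simp only [Real.sinh_add, Real.sinh_sub]
    field_simp
    ring
  have hdiff : fMeasure (pathAdj (x + d + k + 1)) (fun _ _ => (1 : ℝ)) q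
        {f | ¬ SameTree f ⟨x, by omega⟩ ⟨x + d, by omega⟩} =
      Zf (pathAdj (x + d + k + 1)) (fun _ _ => (1 : ℝ)) q -
        fMeasure (pathAdj (x + d + k + 1)) (fun _ _ => (1 : ℝ)) q
          (containsEdges (x + d + k) P) := by
    rw [eq_sub_iff_add_eq, Zf]
    unfold fMeasure
    simp only [Finset.sum_filter, ← Finset.sum_add_distrib]
    refine Finset.sum_congr rfl fun f _ => ?_
    by_cases hf : IsRForest (pathAdj (x + d + k + 1)) f
    · have := sameTree_iff hf.2 (x := ⟨x, by omega⟩) (y := ⟨x + d, by omega⟩)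
        (Fin.le_def.2 (by simp))
      simp only [Set.mem_ofPred_eq, hf, true_and, this, Set.mem_univ, if_true]
      by_cases hm : f ∈ containsEdges (x + d + k) P
      · have hm' := hm
        simp only [hP] at hm'
        simp [hm, hm']
      · have hm' := hm
        simp only [hP] at hm'
        simp [hm, hm']
    · simp [hf]
  rw [Ucorr, fProb, hdiff, hsame, hZ, sub_div, div_self (by positivity),
    mul_div_mul_left _ _ (by positivity)]

/-- **Correlation bounds on the path graph via the simple random walk on ℤ.**
For vertices `x < y` of `PG_n` at distance `d = y - x` and any `q > 0`:
for every `m`, `U_q(x,y) ≤ 1 - P(|S_m| > d)(2/(2+q))^m`, and for every `m` with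
`P(|S_m| < d/2) ≥ 1/2`, `U_q(x,y) ≥ (1-(2/(2+q))^m)² (2 P(|S_m| < d/2) - 1)²`. -/
theorem path_two_point_rw_bounds (n x y : ℕ) (hx : 1 ≤ x) (hxy : x < y) (hy : y ≤ n)
    (q : ℝ) (hq : 0 < q) :
    (∀ m : ℕ,
      Ucorr (pathAdj n) (fun _ _ => (1 : ℝ)) q ⟨x - 1, by omega⟩ ⟨y - 1, by omega⟩ ≤
        1 - srwProb m (fun z => ((y - x : ℕ) : ℤ) < |z|) * (2 / (2 + q)) ^ m) ∧
    (∀ m : ℕ, (1 : ℝ) / 2 ≤ srwProb m (fun z => 2 * |z| < ((y - x : ℕ) : ℤ)) →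
      (1 - (2 / (2 + q)) ^ m) ^ 2 *
          (2 * srwProb m (fun z => 2 * |z| < ((y - x : ℕ) : ℤ)) - 1) ^ 2 ≤
        Ucorr (pathAdj n) (fun _ _ => (1 : ℝ)) q ⟨x - 1, by omega⟩ ⟨y - 1, by omega⟩) := by
  obtain ⟨a, rfl⟩ : ∃ a, x = a + 1 := ⟨x - 1, by omega⟩
  obtain ⟨d, rfl⟩ : ∃ d, y = a + d + 1 := ⟨y - 1 - a, by omega⟩
  obtain ⟨k, rfl⟩ : ∃ k, n = a + d + k + 1 := ⟨n - (a + d + 1), by omega⟩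
  have hd : 1 ≤ d := by omega
  have hyx : a + d + 1 - (a + 1) = d := by omega
  obtain ⟨β, hβ, rfl⟩ : ∃ β, 0 < β ∧ q = 4 * Real.sinh β ^ 2 := by
    refine ⟨Real.arsinh (√q / 2), Real.arsinh_pos_iff.2 (by positivity), ?_⟩
    rw [Real.sinh_arsinh, div_pow, Real.sq_sqrt hq.le]
    ring
  have hc : 2 / (2 + 4 * Real.sinh β ^ 2) = 1 / Real.cosh (2 * β) := by
    rw [Real.cosh_two_mul, Real.cosh_sq, div_eq_div_iff (by positivity) (by positivity)]
    ring
  simp only [hyx, hc, Nat.add_sub_cancel]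
  rw [Ucorr_pathAdj a d k hβ]
  have ha : β ≤ (2 * a + 1) * β := le_mul_of_one_le_left hβ.le (by simp)
  have hk : β ≤ (2 * k + 1) * β := le_mul_of_one_le_left hβ.le (by simp)
  have hpos : 0 < Real.sinh ((2 * a + 1) * β + (2 * k + 1) * β + 2 * d * β) :=
    Real.sinh_pos_iff.2 (by positivity)
  refine ⟨fun m => sub_le_sub_left ?_ 1, fun m hm => ?_⟩
  · rw [le_div_iff₀ hpos]
    refine le_trans ?_ (exp_mul_sinh_le hβ d ha hk)
    refine mul_le_mul_of_nonneg_right ?_ hpos.le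
    rw [one_div, inv_pow, ← div_eq_mul_inv, div_le_iff₀ (pow_pos (Real.cosh_pos _) m), mul_comm]
    exact srwProb_lt_abs_le m d (2 * β)
  · have hupper := (div_le_iff₀ hpos).2 (sinh_add_le_mul_sinh hβ hd ha hk)
    have hC : 1 ≤ Real.cosh ((d + 1) * β) := Real.one_le_cosh _
    refine le_trans ?_ (sub_le_sub_left hupper 1)
    refine le_trans ?_ (sq_one_sub_inv_le hC)
    rw [← mul_pow]
    have hc1 : (1 / Real.cosh (2 * β)) ^ m ≤ 1 :=
      pow_le_one₀ (one_div_nonneg.2 (Real.cosh_pos _).le)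
        ((div_le_one (Real.cosh_pos _)).2 (Real.one_le_cosh _))
    refine pow_le_pow_left₀ (mul_nonneg (by linarith) (by linarith)) ?_ 2
    refine (mul_two_mul_srwProb_sub_one_le m d ((d + 1) / 2) (by omega) (by omega) _).trans ?_
    refine sub_le_sub_left (one_div_le_one_div_of_le (Real.cosh_pos _) ?_) 1
    rw [Real.cosh_le_cosh, abs_of_nonneg (by positivity), abs_of_nonneg (by positivity),
      ← mul_assoc]
    refine mul_le_mul_of_nonneg_right ?_ hβ.le
    exact_mod_cast Nat.div_mul_le_self (d + 1) 2

end
end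

section
/- Let SG_n be the star graph on n vertices with uniform edge weight w>0 on all edges, let c denote the center vertex and x,y two distinct leaves. Then for any q>0: U_q(c,x) = q(q + (n−1)w) / ( (q+w)(q+nw) ) and U_q(x,y) = q( q² + (n+2)wq + 2(n−1)w² ) / ( (q+w)²(q+nw) ). In particular both q ↦ U_q(c,x) and q ↦ U_q(x,y) are strictly concave on (0,∞). -/
open Classical Finset Filter

noncomputable section

/-- The star graph on `n` vertices (realised on `Fin n`): the centre is the vertex with
label `0`, adjacent to the `n-1` leaves. -/
def starAdj (n : ℕ) : Fin n → Fin n → Prop := fun i j =>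
  i ≠ j ∧ ((i : ℕ) = 0 ∨ (j : ℕ) = 0)

section StarForests

variable {V : Type*}

/-- Adjacency in the star with centre `c` on the vertex set `V`. -/
def StarRel (c : V) : V → V → Prop := fun i j => i ≠ j ∧ (i = c ∨ j = c)

theorem isRForest_starRel_iff {c : V} {f : V → Option V} :
    IsRForest (StarRel c) f ↔
      (∀ v, v ≠ c → f v = none ∨ f v = some c) ∧
        ∀ z, f c = some z → z ≠ c ∧ f z = none := by
  constructor
  · rintro ⟨hf, hE⟩
    have hleaf : ∀ v, v ≠ c → f v = none ∨ f v = some c := by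
      intro v hv
      rcases h : f v with _ | u
      · exact Or.inl rfl
      · rcases (hE v u h).2 with h' | h'
        · exact absurd h' hv
        · exact Or.inr (by rw [h'])
    refine ⟨hleaf, fun z hz => ?_⟩
    have hzc : z ≠ c := fun h => (hE c z hz).1 h.symm
    refine ⟨hzc, (hleaf z hzc).resolve_right fun hz' => ?_⟩
    obtain ⟨n, hn⟩ := hf c
    have hcycle : ∀ k, (fstep f)^[k] (some c) = some c ∨ (fstep f)^[k] (some c) = some z := by
      intro k
      induction k with
      | zero => exact Or.inl rfl
      | succ k ih =>
        rw [Function.iterate_succ_apply']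
        rcases ih with ih | ih <;> rw [ih] <;> simp [fstep, hz, hz']
    rcases hcycle n with h | h <;> simp [h] at hn
  · rintro ⟨hleaf, hc⟩
    have hcentre : ∃ n, (fstep f)^[n] (some c) = none := by
      rcases h : f c with _ | z
      · exact ⟨1, by simp [fstep, h]⟩
      · exact ⟨2, by simp [fstep, h, (hc z h).2]⟩
    refine ⟨fun v => ?_, fun v u huv => ?_⟩
    · by_cases hv : v = c
      · rwa [hv]
      · rcases hleaf v hv with h | h
        · exact ⟨1, by simp [fstep, h]⟩
        · obtain ⟨n, hn⟩ := hcentre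
          exact ⟨n + 1, by rw [Function.iterate_succ_apply]; simpa [fstep, h] using hn⟩
    · by_cases hv : v = c
      · subst hv
        exact ⟨(hc u huv).1.symm, Or.inl rfl⟩
      · rcases hleaf v hv with h | h
        · simp [h] at huv
        · have : c = u := by simpa [h] using huv
          exact ⟨this ▸ hv, Or.inr this.symm⟩

theorem anc_of_eq_some {f : V → Option V} {a b : V} (h : f a = some b) : anc f a b :=
  Relation.ReflTransGen.single h

theorem anc.eq_or_exists {f : V → Option V} {a b : V} (h : anc f a b) :
    a = b ∨ ∃ d, f a = some d ∧ anc f d b :=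
  Relation.ReflTransGen.cases_head h

theorem anc.eq_of_eq_none {f : V → Option V} {a b : V} (h : anc f a b) (ha : f a = none) :
    a = b :=
  h.eq_or_exists.resolve_right fun ⟨d, hd, _⟩ => by simp [ha] at hd

theorem sameTree_centre_iff {c v : V} {f : V → Option V} (hf : IsRForest (StarRel c) f)
    (hv : v ≠ c) : SameTree f c v ↔ f v = some c ∨ f c = some v := by
  obtain ⟨hleaf, hc⟩ := isRForest_starRel_iff.1 hf
  constructor
  · rintro ⟨z, hcz, hvz⟩
    rcases hleaf v hv with h | h
    · obtain rfl := hvz.eq_of_eq_none h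
      rcases hcz.eq_or_exists with h' | ⟨d, hd, hdz⟩
      · exact absurd h'.symm hv
      · rw [hdz.eq_of_eq_none (hc d hd).2] at hd
        exact Or.inr hd
    · exact Or.inl h
  · rintro (h | h)
    · exact ⟨c, Relation.ReflTransGen.refl, anc_of_eq_some h⟩
    · exact ⟨v, anc_of_eq_some h, Relation.ReflTransGen.refl⟩

theorem sameTree_leaves_iff {c x y : V} {f : V → Option V} (hf : IsRForest (StarRel c) f)
    (hx : x ≠ c) (hy : y ≠ c) (hxy : x ≠ y) :
    SameTree f x y ↔ SameTree f c x ∧ SameTree f c y := by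
  have hleaf := (isRForest_starRel_iff.1 hf).1
  constructor
  · rintro ⟨z, hxz, hyz⟩
    rcases hxz.eq_or_exists with rfl | ⟨d, hd, hdz⟩
    · obtain ⟨e, he, hez⟩ := hyz.eq_or_exists.resolve_left hxy.symm
      obtain rfl : c = e := by rcases hleaf y hy with h | h <;> simp_all
      exact ⟨⟨x, hez, Relation.ReflTransGen.refl⟩, ⟨x, hez, hyz⟩⟩
    · obtain rfl : c = d := by rcases hleaf x hx with h | h <;> simp_all
      exact ⟨⟨z, hdz, hxz⟩, ⟨z, hdz, hyz⟩⟩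
  · rw [sameTree_centre_iff hf hx, sameTree_centre_iff hf hy]
    rintro ⟨h | h, h' | h'⟩
    · exact ⟨c, anc_of_eq_some h, anc_of_eq_some h'⟩
    · exact ⟨y, (anc_of_eq_some h).tail h', Relation.ReflTransGen.refl⟩
    · exact ⟨x, Relation.ReflTransGen.refl, (anc_of_eq_some h').tail h⟩
    · exact absurd (Option.some.inj (h.symm.trans h')) hxy

variable [Fintype V]

theorem pow_nRoots_mul_fWeight (w q : ℝ) (f : V → Option V) :
    q ^ nRoots f * fWeight (fun _ _ => w) f = ∏ v, (f v).elim q fun _ => w := by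
  rw [nRoots, fWeight, ← Finset.prod_const, Finset.prod_filter, ← Finset.prod_mul_distrib]
  refine Finset.prod_congr rfl fun v _ => ?_
  rcases f v with _ | u <;> simp

variable [DecidableEq V]

/-- The parents allowed for `v` in a star forest where the parent of the centre `c` is `o` and
every vertex of `A` lies in the tree of `c`. -/
def starParents (c : V) (A : Finset V) (o : Option V) (v : V) : Finset (Option V) :=
  if v = c then if o = some c then ∅ else {o}
  else if o = some v then {none}
  else if v ∈ A then {some c} else {none, some c}

theorem mem_piFinset_starParents {c : V} {A : Finset V} (hA : c ∉ A) {o : Option V}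
    {f : V → Option V} :
    f ∈ Fintype.piFinset (starParents c A o) ↔
      (IsRForest (StarRel c) f ∧ ∀ v ∈ A, SameTree f c v) ∧ f c = o := by
  rw [Fintype.mem_piFinset]
  constructor
  · intro h
    have hc := h c
    have ho : o ≠ some c := by
      rintro rfl
      simp [starParents] at hc
    have hco : f c = o := by simpa [starParents, ho] using hc
    have hR : IsRForest (StarRel c) f := by
      rw [isRForest_starRel_iff]
      refine ⟨fun v hv => ?_, fun z hz => ?_⟩
      · have := h v
        simp only [starParents, hv, if_false] at this
        split_ifs at this <;> simp_all
      · have hzc : z ≠ c := by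
          rintro rfl
          exact ho (hco ▸ hz)
        have := h z
        exact ⟨hzc, by simpa [starParents, hzc, ← hco, hz] using this⟩
    refine ⟨⟨hR, fun v hv => ?_⟩, hco⟩
    have hvc : v ≠ c := fun e => hA (e ▸ hv)
    rw [sameTree_centre_iff hR hvc]
    have := h v
    by_cases hov : o = some v
    · exact Or.inr (hco.trans hov)
    · exact Or.inl (by simpa [starParents, hvc, hov, hv] using this)
  · rintro ⟨⟨hR, hS⟩, rfl⟩ v
    obtain ⟨hleaf, hc⟩ := isRForest_starRel_iff.1 hR
    by_cases hv : v = c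
    · subst hv
      have : f v ≠ some v := fun e => (hc v e).1 rfl
      simp [starParents, this]
    · by_cases hcv : f c = some v
      · simp [starParents, hv, hcv, (hc v hcv).2]
      · by_cases hvA : v ∈ A
        · have := (sameTree_centre_iff hR hv).1 (hS v hvA)
          simpa [starParents, hv, hcv, hvA] using this
        · simpa [starParents, hv, hcv, hvA] using hleaf v hv

theorem fMeasure_starRel_eq_sum {c : V} {A : Finset V} (hA : c ∉ A) (w q : ℝ) :
    fMeasure (StarRel c) (fun _ _ => w) q {f | ∀ v ∈ A, SameTree f c v} =
      ∑ o, ∏ v, ∑ p ∈ starParents c A o v, p.elim q fun _ => w := by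
  rw [fMeasure, ← Finset.sum_fiberwise _ (fun f : V → Option V => f c)]
  refine Finset.sum_congr rfl fun o _ => ?_
  rw [Finset.prod_univ_sum]
  refine Finset.sum_congr ?_ fun f _ => pow_nRoots_mul_fWeight w q f
  ext f
  rw [mem_piFinset_starParents hA]
  simp

theorem fMeasure_starRel {c : V} {A : Finset V} (hA : c ∉ A) {w q : ℝ} (hw : 0 < w)
    (hq : 0 < q) :
    fMeasure (StarRel c) (fun _ _ => w) q {f | ∀ v ∈ A, SameTree f c v} =
      (q + w) ^ (Fintype.card V - 1) * (w / (q + w)) ^ #A *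
        (q * (((#A : ℝ) + 1) * q + Fintype.card V * w) / (q + w)) := by
  have hD : q + w ≠ 0 := by positivity
  set b : V → ℝ := fun v => if v ∈ A then w else q + w with hb
  have hb0 : ∀ v, b v ≠ 0 := fun v => by simp only [hb]; split_ifs <;> positivity
  set L : Finset V := univ.erase c with hL
  have hAL : A ⊆ L := fun v hv => by
    simpa [hL] using fun e : v = c => hA (e ▸ hv)
  have hcard : (#L : ℝ) = Fintype.card V - 1 := by
    have := Finset.card_erase_add_one (mem_univ c)
    rw [Finset.card_univ] at this
    rw [hL, ← this]
    push_cast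
    ring
  have hprod : ∏ v ∈ L, b v = (q + w) ^ (Fintype.card V - 1) * (w / (q + w)) ^ #A := by
    have : ∀ v, b v = (q + w) * if v ∈ A then w / (q + w) else 1 := fun v => by
      simp only [hb]
      split_ifs <;> field_simp
    simp_rw [this]
    rw [Finset.prod_mul_distrib, Finset.prod_const, Finset.prod_ite_mem,
      Finset.inter_eq_right.2 hAL, Finset.prod_const, hL, Finset.card_erase_of_mem (mem_univ c),
      Finset.card_univ]
  have hinv : ∑ z ∈ L, (b z)⁻¹ = #L / (q + w) + #A * (w⁻¹ - (q + w)⁻¹) := by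
    have : ∀ v, (b v)⁻¹ = (q + w)⁻¹ + if v ∈ A then w⁻¹ - (q + w)⁻¹ else 0 := fun v => by
      simp only [hb]
      split_ifs <;> ring
    simp_rw [this]
    rw [Finset.sum_add_distrib, Finset.sum_const, Finset.sum_ite_mem,
      Finset.inter_eq_right.2 hAL, Finset.sum_const]
    simp [div_eq_mul_inv]
  have hleaf : ∀ o, ∀ v ∈ L, ∑ p ∈ starParents c A o v, p.elim q (fun _ => w) =
      if o = some v then q else b v := by
    intro o v hv
    have hvc : v ≠ c := Finset.ne_of_mem_erase hv
    simp only [starParents, hvc, if_false, hb]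
    split_ifs <;> simp
  have hsome : ∀ z ∈ L, ∏ v, ∑ p ∈ starParents c A (some z) v, p.elim q (fun _ => w) =
      w * q * (∏ v ∈ L, b v) * (b z)⁻¹ := by
    intro z hz
    have hzc : z ≠ c := Finset.ne_of_mem_erase hz
    have : ∀ v, (if some z = some v then q else b v) =
        b v * if z = v then q * (b z)⁻¹ else 1 := fun v => by
      by_cases h : z = v
      · subst h
        have := hb0 z
        simp only [if_true]
        field_simp
      · simp [h]
    rw [← Finset.mul_prod_erase _ _ (mem_univ c), Finset.prod_congr rfl (hleaf (some z))]
    simp_rw [this]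
    rw [Finset.prod_mul_distrib, Finset.prod_ite_eq, if_pos hz]
    simp [starParents, hzc]
    ring
  have hnone : ∏ v, ∑ p ∈ starParents c A none v, p.elim q (fun _ => w) =
      q * ∏ v ∈ L, b v := by
    rw [← Finset.mul_prod_erase _ _ (mem_univ c), Finset.prod_congr rfl (hleaf none)]
    simp [starParents]
  have hcentre : ∏ v, ∑ p ∈ starParents c A (some c) v, p.elim q (fun _ => w) = 0 :=
    Finset.prod_eq_zero (mem_univ c) (by simp [starParents])
  rw [fMeasure_starRel_eq_sum hA, Fintype.sum_option, hnone,
    ← Finset.add_sum_erase _ _ (mem_univ c), hcentre, Finset.sum_congr rfl hsome,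
    ← Finset.mul_sum, hinv, hprod, hcard]
  field_simp
  ring

theorem Zf_starRel (c : V) {w q : ℝ} (hw : 0 < w) (hq : 0 < q) :
    Zf (StarRel c) (fun _ _ => w) q =
      (q + w) ^ (Fintype.card V - 1) * (q * (q + Fintype.card V * w) / (q + w)) := by
  have := fMeasure_starRel (c := c) (A := ∅) (by simp) hw hq
  simpa [Zf] using this

theorem fMeasure_add_fMeasure_compl (E : V → V → Prop) (w : V → V → ℝ) (q : ℝ)
    (H : Set (V → Option V)) : fMeasure E w q H + fMeasure E w q Hᶜ = Zf E w q := by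
  simp only [Zf, fMeasure, Finset.sum_filter, ← Finset.sum_add_distrib]
  refine Finset.sum_congr rfl fun f _ => ?_
  by_cases hE : IsRForest E f <;> by_cases hH : f ∈ H <;> simp [hE, hH]

theorem Ucorr_starRel_of_sameTree_iff {c : V} {A : Finset V} (hA : c ∉ A) {w q : ℝ} (hw : 0 < w)
    (hq : 0 < q) {x y : V}
    (h : ∀ f, IsRForest (StarRel c) f → (SameTree f x y ↔ ∀ v ∈ A, SameTree f c v)) :
    Ucorr (StarRel c) (fun _ _ => w) q x y =
      1 - (w / (q + w)) ^ #A * (((#A : ℝ) + 1) * q + Fintype.card V * w) /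
        (q + Fintype.card V * w) := by
  have hM : fMeasure (StarRel c) (fun _ _ => w) q {f | SameTree f x y} =
      fMeasure (StarRel c) (fun _ _ => w) q {f | ∀ v ∈ A, SameTree f c v} := by
    simp only [fMeasure]
    refine Finset.sum_congr ?_ fun _ _ => rfl
    ext f
    simp only [Finset.mem_filter, Set.mem_ofPred_eq]
    exact and_congr_right fun _ => and_congr_right fun hf => h f hf
  have hcompl := fMeasure_add_fMeasure_compl (StarRel c) (fun _ _ => w) q {f | SameTree f x y}
  have hcompl' : fMeasure (StarRel c) (fun _ _ => w) q {f | ¬ SameTree f x y} =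
      Zf (StarRel c) (fun _ _ => w) q -
        fMeasure (StarRel c) (fun _ _ => w) q {f | SameTree f x y} :=
    eq_sub_of_add_eq' hcompl
  rw [Ucorr, fProb, hcompl', hM, fMeasure_starRel hA hw hq, Zf_starRel c hw hq]
  have : q + Fintype.card V * w ≠ 0 := by positivity
  have hD : (q + w) ^ (Fintype.card V - 1) ≠ 0 := by positivity
  have hD' : q + w ≠ 0 := by positivity
  generalize (q + w) ^ (Fintype.card V - 1) = d at *
  generalize (w / (q + w)) ^ #A = e at *
  field_simp

theorem Ucorr_starRel_centre_leaf {c x : V} (hx : x ≠ c) {w q : ℝ} (hw : 0 < w) (hq : 0 < q) :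
    Ucorr (StarRel c) (fun _ _ => w) q c x =
      1 - w * (2 * q + Fintype.card V * w) / ((q + w) * (q + Fintype.card V * w)) := by
  rw [Ucorr_starRel_of_sameTree_iff (A := {x}) (by simpa using hx.symm) hw hq (by simp)]
  simp only [Finset.card_singleton, Nat.cast_one, pow_one]
  have : q + Fintype.card V * w ≠ 0 := by positivity
  have hD : q + w ≠ 0 := by positivity
  field_simp
  ring

theorem Ucorr_starRel_leaves {c x y : V} (hx : x ≠ c) (hy : y ≠ c) (hxy : x ≠ y) {w q : ℝ}
    (hw : 0 < w) (hq : 0 < q) :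
    Ucorr (StarRel c) (fun _ _ => w) q x y =
      1 - w ^ 2 * (3 * q + Fintype.card V * w) /
        ((q + w) ^ 2 * (q + Fintype.card V * w)) := by
  rw [Ucorr_starRel_of_sameTree_iff (c := c) (A := {x, y}) (by simp [hx.symm, hy.symm]) hw hq
    (fun f hf => by simpa using sameTree_leaves_iff hf hx hy hxy)]
  rw [Finset.card_pair hxy]
  have : q + Fintype.card V * w ≠ 0 := by positivity
  have hD : q + w ≠ 0 := by positivity
  push_cast
  field_simp
  ring

end StarForests

section Convexity

theorem StrictConvexOn.mul_of_nonneg_of_monovaryOn {s : Set ℝ} {f g : ℝ → ℝ}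
    (hf : StrictConvexOn ℝ s f) (hg : StrictConvexOn ℝ s g)
    (hf₀ : ∀ x ∈ s, 0 ≤ f x) (hg₀ : ∀ x ∈ s, 0 ≤ g x) (hfg : MonovaryOn f g s) :
    StrictConvexOn ℝ s fun x => f x * g x := by
  refine ⟨hf.1, fun x hx y hy hxy a b ha hb hab => ?_⟩
  have hz := hf.1 hx hy ha.le hb.le hab
  have h₁ := hf.2 hx hy hxy ha hb hab
  have h₂ := hg.2 hx hy hxy ha hb hab
  have h₃ := mul_lt_mul'' h₁ h₂ (hf₀ _ hz) (hg₀ _ hz)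
  have h₄ := mul_nonneg (mul_nonneg ha.le hb.le)
    (monovaryOn_iff_forall_mul_nonneg.1 hfg hx hy)
  simp only [smul_eq_mul] at h₃ ⊢
  obtain rfl : b = 1 - a := by linarith
  nlinarith

theorem strictConvexOn_inv_add {t : ℝ} (ht : 0 < t) :
    StrictConvexOn ℝ (Set.Ioi (0 : ℝ)) fun p => (p + t)⁻¹ := by
  have h := (strictConvexOn_zpow (m := -1) (by norm_num) (by norm_num)).translate_left t
  simp only [zpow_neg_one, Function.comp_def] at h
  refine h.subset (fun p hp => ?_) (convex_Ioi 0)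
  simp only [Set.mem_preimage, Set.mem_Ioi] at hp ⊢
  linarith

theorem strictConvexOn_inv_add_mul_inv_add {s t : ℝ} (hs : 0 < s) (ht : 0 < t) :
    StrictConvexOn ℝ (Set.Ioi (0 : ℝ)) fun p => (p + s)⁻¹ * (p + t)⁻¹ := by
  have hanti : ∀ {r : ℝ}, 0 < r → AntitoneOn (fun p : ℝ => (p + r)⁻¹) (Set.Ioi 0) := by
    intro r hr a ha b hb hab
    simp only [Set.mem_Ioi] at ha hb
    exact inv_anti₀ (by positivity) (by linarith)
  refine (strictConvexOn_inv_add hs).mul_of_nonneg_of_monovaryOn (strictConvexOn_inv_add ht)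
    (fun p hp => ?_) (fun p hp => ?_) ((hanti hs).monovaryOn (hanti ht))
  all_goals
    simp only [Set.mem_Ioi] at hp
    positivity

theorem StrictConvexOn.one_sub_combination {s : Set ℝ} {f g : ℝ → ℝ}
    (hf : StrictConvexOn ℝ s f) (hg : StrictConvexOn ℝ s g) {a b : ℝ} (ha : 0 < a)
    (hb : 0 ≤ b) : StrictConcaveOn ℝ s fun p => 1 - (a * f p + b * g p) := by
  refine ⟨hf.1, fun x hx y hy hxy u v hu hv huv => ?_⟩
  have h₁ := mul_lt_mul_of_pos_left (hf.2 hx hy hxy hu hv huv) ha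
  have h₂ := mul_le_mul_of_nonneg_left (hg.2 hx hy hxy hu hv huv).le hb
  simp only [smul_eq_mul] at h₁ h₂ ⊢
  linear_combination h₁ + h₂ + huv

end Convexity

theorem starAdj_eq_starRel {n : ℕ} {c : Fin n} (hc : (c : ℕ) = 0) : starAdj n = StarRel c := by
  funext i j
  simp [starAdj, StarRel, Fin.ext_iff, hc]

/-- **Two-point correlations on the homogeneous star graph.** For the star graph `SG_n`
with uniform edge weight `w > 0`, centre `c` and distinct leaves `x, y`, and `q > 0`:
`U_q(c,x) = q(q+(n-1)w)/((q+w)(q+nw))`,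
`U_q(x,y) = q(q²+(n+2)wq+2(n-1)w²)/((q+w)²(q+nw))`,
and both maps `q ↦ U_q(c,x)`, `q ↦ U_q(x,y)` are strictly concave on `(0,∞)`. -/
theorem star_two_point (n : ℕ) (w q : ℝ) (hw : 0 < w) (hq : 0 < q)
    (c x y : Fin n) (hc : (c : ℕ) = 0) (hx : (x : ℕ) ≠ 0) (hy : (y : ℕ) ≠ 0)
    (hxy : x ≠ y) :
    Ucorr (starAdj n) (fun _ _ => w) q c x =
      q * (q + ((n : ℝ) - 1) * w) / ((q + w) * (q + (n : ℝ) * w)) ∧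
    Ucorr (starAdj n) (fun _ _ => w) q x y =
      q * (q ^ 2 + ((n : ℝ) + 2) * w * q + 2 * ((n : ℝ) - 1) * w ^ 2) /
        ((q + w) ^ 2 * (q + (n : ℝ) * w)) ∧
    StrictConcaveOn ℝ (Set.Ioi (0 : ℝ)) (fun p => Ucorr (starAdj n) (fun _ _ => w) p c x) ∧
    StrictConcaveOn ℝ (Set.Ioi (0 : ℝ))
      (fun p => Ucorr (starAdj n) (fun _ _ => w) p x y) := by
  have hxc : x ≠ c := fun h => hx (h ▸ hc)
  have hyc : y ≠ c := fun h => hy (h ▸ hc)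
  have hn : (3 : ℝ) ≤ n := by
    have : 3 ≤ n := by
      have hxy' : (x : ℕ) ≠ y := fun h => hxy (Fin.ext h)
      omega
    exact_mod_cast this
  have hn1 : (0 : ℝ) < n - 1 := by linarith
  have hnw : 0 < (n : ℝ) * w := by positivity
  have hU₁ : ∀ p : ℝ, 0 < p → Ucorr (starAdj n) (fun _ _ => w) p c x =
      1 - w * (2 * p + n * w) / ((p + w) * (p + n * w)) := fun p hp => by
    rw [starAdj_eq_starRel hc, Ucorr_starRel_centre_leaf hxc hw hp, Fintype.card_fin]
  have hU₂ : ∀ p : ℝ, 0 < p → Ucorr (starAdj n) (fun _ _ => w) p x y =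
      1 - w ^ 2 * (3 * p + n * w) / ((p + w) ^ 2 * (p + n * w)) := fun p hp => by
    rw [starAdj_eq_starRel hc, Ucorr_starRel_leaves hxc hyc hxy hw hp, Fintype.card_fin]
  refine ⟨?_, ?_, ?_, ?_⟩
  · rw [hU₁ q hq]
    field_simp
    ring
  · rw [hU₂ q hq]
    field_simp
    ring
  · refine ((strictConvexOn_inv_add hnw).one_sub_combination (strictConvexOn_inv_add hw)
      (a := w * (n / (n - 1))) (b := w * ((n - 2) / (n - 1))) (by positivity)
      (mul_nonneg hw.le (div_nonneg (by linarith) hn1.le))).congr fun p hp => ?_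
    have hp' : 0 < p := hp
    simp only [hU₁ p hp']
    field_simp
    ring
  · refine ((strictConvexOn_inv_add_mul_inv_add hw hnw).one_sub_combination
      (strictConvexOn_inv_add_mul_inv_add hw hw)
      (a := w ^ 2 * (2 * n / (n - 1))) (b := w ^ 2 * ((n - 3) / (n - 1))) (by positivity)
      (mul_nonneg (by positivity) (div_nonneg (by linarith) hn1.le))).congr fun p hp => ?_
    have hp' : 0 < p := hp
    simp only [hU₂ p hp']
    field_simp
    ring

end
end
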